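/- Let G be a discrete group and let ∂_F G be a Furstenberg boundary of G. The action of G on ∂_F G is free (i.e., sx = x for some x ∈ ∂_F G implies s = e) if and only if the only G-equivariant u.c.p. map Φ : C*_λ(G) → C(∂_F G) is the map given by Φ(a) = τ_λ(a)·1 for all a ∈ C*_λ(G). -/

import Mathlib

noncomputable section
open scoped ENNReal ComplexOrder lp
open MeasureTheory
set_option maxHeartbeats 1000000
set_option synthInstance.maxHeartbeats 1000000

universe u

variable {G : Type u} [Group G]

theorem translat_mem (g : G) (f : ℓ²(G, ℂ)) : Memℓp (fun h => f (g⁻¹ * h)) 2 := by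
  have hf : Summable fun i : G => ‖f i‖ ^ (2 : ℝ≥0∞).toReal :=
    (memℓp_gen_iff (by norm_num)).1 (lp.memℓp f)
  exact memℓp_gen ((Equiv.mulLeft g⁻¹).summable_iff.2 hf)

/-- The left regular representation of `g ∈ G` as a linear isometric bijection of `ℓ²(G)`,
given by `(λ_g ξ)(h) = ξ(g⁻¹ h)`. -/
def lregE (g : G) : ℓ²(G, ℂ) ≃ₗᵢ[ℂ] ℓ²(G, ℂ) :=
{ toFun := fun f => ⟨fun h => f (g⁻¹ * h), translat_mem g f⟩
  invFun := fun f => ⟨fun h => f (g * h), by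
    have := translat_mem g⁻¹ f; simp only [inv_inv] at this; exact this⟩
  map_add' := by intro f₁ f₂; ext h; simp [lp.coeFn_add]; rfl
  map_smul' := by intro c f; ext h; simp [lp.coeFn_smul]
  left_inv := by intro f; ext h; simp
  right_inv := by intro f; ext h; simp
  norm_map' := by
    intro f
    rw [lp.norm_eq_tsum_rpow (by norm_num) f, lp.norm_eq_tsum_rpow (by norm_num)]
    congr 1
    exact (Equiv.mulLeft g⁻¹).tsum_eq (fun h => ‖f h‖ ^ (2 : ℝ≥0∞).toReal) }

/-- The left regular representation `λ` as bounded operators on `ℓ²(G)`. -/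
def lreg (g : G) : ℓ²(G, ℂ) →L[ℂ] ℓ²(G, ℂ) :=
  (lregE g).toContinuousLinearEquiv.toContinuousLinearMap

variable (G) in
/-- The reduced group C*-algebra `C*_λ(G)`: the norm-closed star subalgebra of the algebra of
bounded operators on `ℓ²(G)` generated by the image of the left regular representation. -/
def redCstar : StarSubalgebra ℂ (ℓ²(G, ℂ) →L[ℂ] ℓ²(G, ℂ)) :=
  (StarAlgebra.adjoin ℂ (Set.range (lreg (G := G)))).topologicalClosure

/-- `λ_g` as an element of the reduced group C*-algebra. -/
def uu (g : G) : redCstar G :=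
  ⟨lreg g, StarSubalgebra.le_topologicalClosure _ (StarAlgebra.subset_adjoin ℂ _ ⟨g, rfl⟩)⟩

/-- The vector `δ_e ∈ ℓ²(G)`. -/
def deltaOne : ℓ²(G, ℂ) := letI := Classical.decEq G; lp.single 2 (1 : G) 1

variable (G) in
/-- The canonical tracial state `τ_λ(a) = ⟨a δ_e, δ_e⟩` on the reduced C*-algebra
(as a scalar-valued function). -/
def tauF (a : redCstar G) : ℂ :=
  inner (𝕜 := ℂ) (deltaOne (G := G)) ((a : ℓ²(G, ℂ) →L[ℂ] ℓ²(G, ℂ)) (deltaOne (G := G)))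

attribute [irreducible] redCstar lreg lregE deltaOne uu tauF

/-- `X` is a `G`-boundary: a nonempty compact Hausdorff `G`-space such that for every regular
Borel probability measure `μ` on `X` and every `x ∈ X`, the point mass `δ_x` lies in the
weak* closure of the orbit `Gμ`. -/
def IsBoundary (G X : Type*) [Group G] [TopologicalSpace X] [CompactSpace X] [T2Space X]
    [MulAction G X] [ContinuousConstSMul G X] : Prop :=
  Nonempty X ∧
  letI : MeasurableSpace X := borel X
  haveI : BorelSpace X := ⟨rfl⟩
  ∀ (μ : ProbabilityMeasure X) (x : X),
    (⟨Measure.dirac x, Measure.dirac.isProbabilityMeasure⟩ : ProbabilityMeasure X) ∈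
      closure {ν : ProbabilityMeasure X |
        ∃ g : G, ν = μ.map ((continuous_const_smul g).measurable.aemeasurable (μ := μ.toMeasure))
          (f := (g • ·))}

/-- `Y` is a Furstenberg boundary of `G`: a `G`-boundary admitting a continuous `G`-equivariant
surjection onto every `G`-boundary. -/
def IsFurstenberg (G Y : Type u) [Group G] [TopologicalSpace Y] [CompactSpace Y] [T2Space Y]
    [MulAction G Y] [ContinuousConstSMul G Y] : Prop :=
  IsBoundary G Y ∧
  ∀ (X : Type u) (iT : TopologicalSpace X) (iC : @CompactSpace X iT) (iH : @T2Space X iT)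
    (iM : MulAction G X) (iS : @ContinuousConstSMul G X iT iM.toSMul),
    @IsBoundary G X _ iT iC iH iM iS →
      ∃ q : Y → X, @Continuous _ _ _ iT q ∧ Function.Surjective q ∧
        ∀ (g : G) (y : Y), q (g • y) = g • q y

/-- A linear map into `C(Y, ℂ)` is unital completely positive: it is unital and its entrywise
extensions to matrix algebras map positive elements to positive elements. -/
def IsUCP {Y : Type u} [TopologicalSpace Y] (Φ : redCstar G →L[ℂ] C(Y, ℂ)) : Prop :=
  Φ 1 = 1 ∧ ∀ (n : ℕ) (M : Matrix (Fin n) (Fin n) (redCstar G)),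
    (∃ N : Matrix (Fin n) (Fin n) (redCstar G), M = star N * N) →
      ∃ P : Matrix (Fin n) (Fin n) C(Y, ℂ), M.map Φ = star P * P

/-- `G`-equivariance of a map `C*_λ(G) → C(Y)`, for the conjugation action on `C*_λ(G)` and
the translation action on `C(Y)`: `Φ(λ_g a λ_g⁻¹)(y) = Φ(a)(g⁻¹ y)`. -/
def IsEquivariant {Y : Type u} [TopologicalSpace Y] [MulAction G Y]
    (Φ : redCstar G →L[ℂ] C(Y, ℂ)) : Prop :=
  ∀ (g : G) (a : redCstar G) (y : Y), Φ (uu g * a * uu g⁻¹) y = Φ a (g⁻¹ • y)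


section helpers
set_option linter.style.haveILetI false
set_option linter.unusedSectionVars false
set_option linter.unusedVariables false
open Filter Topology

/-- Unital positive functionals on `C(X, ℝ)`. -/
def IsSt {X : Type*} [TopologicalSpace X] (Λ : C(X, ℝ) →ₗ[ℝ] ℝ) : Prop :=
  Λ 1 = 1 ∧ ∀ f, 0 ≤ f → 0 ≤ Λ f

/-- Translation as a continuous map. -/
def trC {X : Type*} [TopologicalSpace X] [MulAction G X] [ContinuousConstSMul G X] (g : G) :
    C(X, X) := ⟨fun x => g • x, continuous_const_smul g⟩

theorem exists_prob_of_isSt {X : Type*} [TopologicalSpace X] [CompactSpace X] [T2Space X]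
    [MeasurableSpace X] [BorelSpace X] (Λ : C(X, ℝ) →ₗ[ℝ] ℝ) (hΛ : IsSt Λ) :
    ∃ μ : ProbabilityMeasure X, ∀ f : C(X, ℝ), ∫ x, f x ∂(μ : Measure X) = Λ f := by
  let L : CompactlySupportedContinuousMap X ℝ →ₗ[ℝ] ℝ :=
    { toFun := fun f => Λ f.toContinuousMap
      map_add' := fun f g => by rw [← map_add]; rfl
      map_smul' := fun c f => by rw [RingHom.id_apply, ← map_smul]; rfl }
  let Lp : CompactlySupportedContinuousMap X ℝ →ₚ[ℝ] ℝ :=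
    PositiveLinearMap.mk₀ L (fun f hf => hΛ.2 _ (fun x => hf x))
  have key : ∀ f : C(X, ℝ), ∫ x, f x ∂(RealRMK.rieszMeasure Lp) = Λ f := fun f =>
    RealRMK.integral_rieszMeasure Lp (CompactlySupportedContinuousMap.continuousMapEquiv f)
  have h1 := key 1
  have hp : IsProbabilityMeasure (RealRMK.rieszMeasure Lp) := by
    rw [hΛ.1] at h1
    simp [Measure.real] at h1
    constructor
    have : (RealRMK.rieszMeasure Lp) Set.univ ≠ ⊤ := by
      intro h; rw [h] at h1; simp at h1
    rw [← ENNReal.ofReal_toReal this, h1]; simp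
  exact ⟨⟨_, hp⟩, key⟩

/-- Point mass as a probability measure. -/
def dP {X : Type*} [MeasurableSpace X] (w : X) : ProbabilityMeasure X :=
  ⟨Measure.dirac w, Measure.dirac.isProbabilityMeasure⟩

theorem bdry_filter {X : Type*} [TopologicalSpace X] [CompactSpace X] [T2Space X]
    [MulAction G X] [ContinuousConstSMul G X] (h : IsBoundary G X)
    (Λ : C(X, ℝ) →ₗ[ℝ] ℝ) (hΛ : IsSt Λ) (w : X) :
    ∃ U : Ultrafilter G, ∀ f : C(X, ℝ),
      Tendsto (fun g : G => Λ (f.comp (trC g))) (U : Filter G) (𝓝 (f w)) := by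
  let _ : MeasurableSpace X := borel X
  have _ : BorelSpace X := ⟨rfl⟩
  obtain ⟨μ, hμ⟩ := exists_prob_of_isSt Λ hΛ
  let m : G → ProbabilityMeasure X := fun g =>
    μ.map ((continuous_const_smul g).measurable.aemeasurable (μ := μ.toMeasure)) (f := (g • ·))
  have hset : {ν : ProbabilityMeasure X | ∃ g : G, ν = m g} = Set.range m := by
    ext ν; simp [eq_comm]
  have hc : dP w ∈ closure {ν : ProbabilityMeasure X | ∃ g : G, ν = m g} := h.2 μ w
  rw [hset, mem_closure_iff_nhds] at hc
  have hnb : (comap m (𝓝 (dP w))).NeBot := by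
    rw [comap_neBot_iff]
    intro t ht
    obtain ⟨_, h1, g, rfl⟩ := hc t ht
    exact ⟨g, h1⟩
  obtain ⟨U, hU⟩ : ∃ U : Ultrafilter G, Tendsto m (U : Filter G)
      (𝓝 (dP w)) :=
    ⟨Ultrafilter.of _, tendsto_comap.mono_left (Ultrafilter.of_le _)⟩
  refine ⟨U, fun f => ?_⟩
  rw [ProbabilityMeasure.tendsto_iff_forall_integral_tendsto] at hU
  have := hU (BoundedContinuousFunction.mkOfCompact f)
  simp only [BoundedContinuousFunction.mkOfCompact_apply] at this
  rw [show (∫ ω, f ω ∂((dP w) : Measure X)) = f w from integral_dirac' _ _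
      f.continuous.stronglyMeasurable] at this
  refine this.congr fun g => ?_
  rw [← hμ]
  exact integral_map ((continuous_const_smul g).measurable.aemeasurable)
    f.continuous.stronglyMeasurable.aestronglyMeasurable

theorem bdry_of {X : Type*} [TopologicalSpace X] [CompactSpace X] [T2Space X]
    [MulAction G X] [ContinuousConstSMul G X] (hne : Nonempty X)
    (H : ∀ (Λ : C(X, ℝ) →ₗ[ℝ] ℝ) (_ : IsSt Λ) (w : X),
      ∃ l : Filter G, l.NeBot ∧ ∀ f : C(X, ℝ),
      Tendsto (fun g : G => Λ (f.comp (trC g))) l (𝓝 (f w))) : IsBoundary G X := by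
  refine ⟨hne, ?_⟩
  let _ : MeasurableSpace X := borel X
  have _ : BorelSpace X := ⟨rfl⟩
  intro μ w
  have hInt : ∀ f : C(X, ℝ), Integrable f (μ : Measure X) := fun f =>
    (BoundedContinuousFunction.mkOfCompact f).integrable _
  let Λ : C(X, ℝ) →ₗ[ℝ] ℝ :=
    { toFun := fun f => ∫ x, f x ∂(μ : Measure X)
      map_add' := fun f g => integral_add (hInt f) (hInt g)
      map_smul' := fun c f => integral_const_mul c f }
  have hΛ : IsSt Λ := ⟨by simp [Λ], fun f hf => integral_nonneg (fun x => hf x)⟩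
  obtain ⟨l, hl, hlim⟩ := H Λ hΛ w
  let m : G → ProbabilityMeasure X := fun g =>
    μ.map ((continuous_const_smul g).measurable.aemeasurable (μ := μ.toMeasure)) (f := (g • ·))
  suffices hT : Tendsto m l
      (𝓝 (dP w)) by
    have hmem : dP w ∈ closure {ν : ProbabilityMeasure X | ∃ g : G, ν = m g} :=
      mem_closure_of_tendsto hT (Eventually.of_forall fun g => ⟨g, rfl⟩)
    exact hmem
  rw [ProbabilityMeasure.tendsto_iff_forall_integral_tendsto]
  intro f
  have := hlim f.toContinuousMap
  rw [show (∫ ω, f ω ∂((dP w) : Measure X)) = f w from integral_dirac' _ _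
      f.continuous.stronglyMeasurable]
  refine this.congr fun g => ?_
  symm
  exact integral_map ((continuous_const_smul g).measurable.aemeasurable)
    f.continuous.stronglyMeasurable.aestronglyMeasurable

section WD
variable {V W : Type*} [NormedAddCommGroup V] [NormedSpace ℝ V]
  [NormedAddCommGroup W] [NormedSpace ℝ W]

/-- Precomposition on weak duals. -/
def preW (A : V →L[ℝ] W) : WeakDual ℝ W →L[ℝ] WeakDual ℝ V where
  toFun x := StrongDual.toWeakDual ((WeakDual.toStrongDual x).comp A)
  map_add' x y := rfl
  map_smul' c x := rfl
  cont := WeakDual.continuous_of_continuous_eval fun v => WeakDual.eval_continuous (A v)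

@[simp] theorem preW_apply (A : V →L[ℝ] W) (x : WeakDual ℝ W) (v : V) : preW A x v = x (A v) := rfl

theorem wd_add (x y : WeakDual ℝ V) (v : V) : (x + y) v = x v + y v := rfl
theorem wd_smul (c : ℝ) (x : WeakDual ℝ V) (v : V) : (c • x) v = c * x v := rfl

/-- Abstract state space. -/
def stSet (P : Set V) (e : V) : Set (WeakDual ℝ V) := {x | x e = 1 ∧ ∀ v ∈ P, 0 ≤ x v}

theorem stSet_closed (P : Set V) (e : V) : IsClosed (stSet P e) := by
  have : stSet P e = {x : WeakDual ℝ V | x e = 1} ∩ ⋂ v ∈ P, {x : WeakDual ℝ V | 0 ≤ x v} := by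
    ext x; simp [stSet]
  rw [this]
  refine (isClosed_eq (WeakDual.eval_continuous e) continuous_const).inter ?_
  exact isClosed_biInter fun v _ => isClosed_le continuous_const (WeakDual.eval_continuous v)

theorem stSet_convex (P : Set V) (e : V) : Convex ℝ (stSet P e) := by
  intro x hx y hy a b ha hb hab
  refine ⟨?_, fun v hv => ?_⟩
  · rw [wd_add, wd_smul, wd_smul, hx.1, hy.1]; linarith
  · rw [wd_add, wd_smul, wd_smul]
    have := mul_nonneg ha (hx.2 v hv)
    have := mul_nonneg hb (hy.2 v hv)
    linarith

theorem stSet_bound {P : Set V} {e : V} (hP : ∀ v, ‖v‖ • e - v ∈ P) {x : WeakDual ℝ V}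
    (hx : x ∈ stSet P e) (v : V) : |x v| ≤ ‖v‖ := by
  have h1 := hx.2 _ (hP v)
  have h2 := hx.2 _ (hP (-v))
  rw [map_sub, map_smul, hx.1] at h1 h2
  simp at h1 h2
  rw [abs_le]; constructor <;> linarith

theorem stSet_compact {P : Set V} {e : V} (hP : ∀ v, ‖v‖ • e - v ∈ P) :
    IsCompact (stSet P e) := by
  refine (WeakDual.isCompact_closedBall (𝕜 := ℝ) (E := V) 0 1).of_isClosed_subset
    (stSet_closed P e) ?_
  intro x hx
  simp only [Set.mem_preimage, mem_closedBall_zero_iff]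
  refine ContinuousLinearMap.opNorm_le_bound _ zero_le_one fun v => ?_
  rw [one_mul]
  exact stSet_bound hP hx v

/-- Minimal invariant compact convex set. -/
structure MinSet (L : G → V →L[ℝ] V) (K : Set (WeakDual ℝ V)) : Prop where
  ne : K.Nonempty
  cpt : IsCompact K
  cvx : Convex ℝ K
  inv : ∀ g, ∀ x ∈ K, preW (L g) x ∈ K
  min : ∀ K' ⊆ K, K'.Nonempty → IsClosed K' → Convex ℝ K' →
    (∀ g, ∀ x ∈ K', preW (L g) x ∈ K') → K' = K

theorem exists_minSet (L : G → V →L[ℝ] V) (K : Set (WeakDual ℝ V)) (hne : K.Nonempty)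
    (hc : IsCompact K) (hcv : Convex ℝ K) (hi : ∀ g, ∀ x ∈ K, preW (L g) x ∈ K) :
    ∃ K0 ⊆ K, MinSet L K0 := by
  let S : Set (Set (WeakDual ℝ V)) := {C | C ⊆ K ∧ C.Nonempty ∧ IsClosed C ∧ Convex ℝ C ∧
    ∀ g, ∀ x ∈ C, preW (L g) x ∈ C}
  obtain ⟨m, hmK, hm⟩ := zorn_superset_nonempty S (fun c hcS hch hcne => by
    refine ⟨⋂₀ c, ⟨?_, ?_, ?_, ?_, ?_⟩, fun s hs => Set.sInter_subset_of_mem hs⟩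
    · obtain ⟨s, hs⟩ := hcne
      exact (Set.sInter_subset_of_mem hs).trans (hcS hs).1
    · haveI : Nonempty c := hcne.to_subtype
      refine IsCompact.nonempty_sInter_of_directed_nonempty_isCompact_isClosed ?_
        (fun U hU => (hcS hU).2.1)
        (fun U hU => hc.of_isClosed_subset (hcS hU).2.2.1 (hcS hU).1)
        (fun U hU => (hcS hU).2.2.1)
      intro a ha b hb
      rcases hch.total ha hb with h | h
      · exact ⟨a, ha, subset_rfl, h⟩
      · exact ⟨b, hb, h, subset_rfl⟩
    · exact isClosed_sInter fun U hU => (hcS hU).2.2.1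
    · exact convex_sInter fun U hU => (hcS hU).2.2.2.1
    · intro g x hx U hU
      exact (hcS hU).2.2.2.2 g x (hx U hU)) K ⟨subset_rfl, hne, hc.isClosed, hcv, hi⟩
  have hmS : m ∈ S := hm.1
  refine ⟨m, hmK, hmS.2.1, hc.of_isClosed_subset hmS.2.2.1 hmK, hmS.2.2.2.1, hmS.2.2.2.2, ?_⟩
  intro K' hK' h1 h2 h3 h4
  exact subset_antisymm hK' (hm.2 (y := K') ⟨hK'.trans hmK, h1, h2, h3, h4⟩ hK')

theorem wd_sep {K : Set (WeakDual ℝ V)} (hcl : IsClosed K) (hcv : Convex ℝ K)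
    {b : WeakDual ℝ V} (hb : b ∉ K) : ∃ (v : V) (c : ℝ), (∀ x ∈ K, x v < c) ∧ c < b v := by
  haveI : LocallyConvexSpace ℝ (WeakDual ℝ V) :=
    inferInstanceAs (LocallyConvexSpace ℝ (WeakBilin (topDualPairing ℝ V)))
  obtain ⟨f, c, h1, h2⟩ := geometric_hahn_banach_closed_point hcv hcl hb
  obtain ⟨v, hv⟩ := LinearMap.dualEmbedding_surjective (topDualPairing ℝ V) f
  refine ⟨v, c, fun x hx => ?_, ?_⟩
  · have := h1 x hx; rw [← hv] at this; exact this
  · rw [← hv] at h2; exact h2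

end WD

section Bdry
variable {V : Type*} [NormedAddCommGroup V] [NormedSpace ℝ V]

theorem wd_ext {V : Type*} [NormedAddCommGroup V] [NormedSpace ℝ V] {x y : WeakDual ℝ V}
    (h : ∀ v, x v = y v) : x = y := DFunLike.ext _ _ h

/-- The evaluation map from `V` to continuous functions on a bounded set of functionals. -/
def evX (X : Set (WeakDual ℝ V)) [CompactSpace X] (hb : ∀ x ∈ X, ∀ v, |x v| ≤ ‖v‖) :
    V →L[ℝ] C(X, ℝ) :=
  LinearMap.mkContinuous
    { toFun := fun v => ⟨fun x => x.1 v, (WeakDual.eval_continuous v).comp continuous_subtype_val⟩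
      map_add' := fun v w => by ext x; exact map_add x.1 v w
      map_smul' := fun c v => by ext x; exact map_smul x.1 c v } 1 (fun v => by
        rw [one_mul, ContinuousMap.norm_le _ (norm_nonneg _)]
        exact fun x => hb x.1 x.2 v)

@[simp] theorem evX_apply (X : Set (WeakDual ℝ V)) [CompactSpace X]
    (hb : ∀ x ∈ X, ∀ v, |x v| ≤ ‖v‖) (v : V) (x : X) : evX X hb v x = x.1 v := rfl

/-- States on `C(X)`. -/
def stC (X : Type*) [TopologicalSpace X] [CompactSpace X] : Set (WeakDual ℝ C(X, ℝ)) :=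
  stSet {f | 0 ≤ f} 1

theorem stC_hP (X : Type*) [TopologicalSpace X] [CompactSpace X] (f : C(X, ℝ)) :
    ‖f‖ • (1 : C(X, ℝ)) - f ∈ {f : C(X, ℝ) | 0 ≤ f} := by
  intro x
  have := (abs_le.1 (f.norm_coe_le_norm x)).2
  simpa using this

theorem bary_mem {K : Set (WeakDual ℝ V)} (hcl : IsClosed K) (hcv : Convex ℝ K)
    (X : Set (WeakDual ℝ V)) [CompactSpace X] (hXK : X ⊆ K)
    (hb : ∀ x ∈ X, ∀ v, |x v| ≤ ‖v‖) {ν : WeakDual ℝ C(X, ℝ)} (hν : ν ∈ stC X) :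
    preW (evX X hb) ν ∈ K := by
  by_contra hn
  obtain ⟨v, c, h1, h2⟩ := wd_sep hcl hcv hn
  have : 0 ≤ ν (c • (1 : C(X, ℝ)) - evX X hb v) := by
    refine hν.2 _ fun x => ?_
    have := (h1 x.1 (hXK x.2)).le
    simpa using this
  rw [map_sub, map_smul, hν.1] at this
  simp at this h2
  linarith

/-- Multiplication of a functional by a function. -/
def mulW {X : Type*} [TopologicalSpace X] [CompactSpace X] (f : C(X, ℝ)) :
    C(X, ℝ) →L[ℝ] C(X, ℝ) := ContinuousLinearMap.mul ℝ C(X, ℝ) f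

@[simp] theorem mulW_apply {X : Type*} [TopologicalSpace X] [CompactSpace X] (f h : C(X, ℝ)) :
    mulW f h = f * h := rfl

theorem bauer_aux {K : Set (WeakDual ℝ V)} (hcl : IsClosed K) (hcv : Convex ℝ K)
    (X : Set (WeakDual ℝ V)) [CompactSpace X] (hXK : X ⊆ K)
    (hb : ∀ x ∈ X, ∀ v, |x v| ≤ ‖v‖) {ν : WeakDual ℝ C(X, ℝ)} (hν : ν ∈ stC X)
    (hx : preW (evX X hb) ν ∈ K.extremePoints ℝ) (f : C(X, ℝ))
    (h0 : ∀ y, 1 / 3 ≤ f y) (h1 : ∀ y, f y ≤ 2 / 3) (v : V) :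
    ν (f * evX X hb v) = ν f * ν (evX X hb v) := by
  set t := ν f with ht
  have ht0 : 1 / 3 ≤ t := by
    have := hν.2 (f - (1 / 3 : ℝ) • (1 : C(X, ℝ))) (fun y => by have := h0 y; simp; linarith)
    rw [map_sub, map_smul, hν.1] at this
    simp at this; linarith
  have ht1 : t ≤ 2 / 3 := by
    have := hν.2 ((2 / 3 : ℝ) • (1 : C(X, ℝ)) - f) (fun y => by have := h1 y; simp; linarith)
    rw [map_sub, map_smul, hν.1] at this
    simp at this; linarith
  let ν1 : WeakDual ℝ C(X, ℝ) := t⁻¹ • preW (mulW f) ν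
  let ν2 : WeakDual ℝ C(X, ℝ) := (1 - t)⁻¹ • preW (mulW (1 - f)) ν
  have hν1 : ν1 ∈ stC X := by
    refine ⟨?_, fun h hh => ?_⟩
    · simp only [ν1, wd_smul, preW_apply, mulW_apply, mul_one]
      rw [← ht]; field_simp
    · simp only [ν1, wd_smul, preW_apply, mulW_apply]
      refine mul_nonneg (by positivity) (hν.2 _ fun y => ?_)
      exact mul_nonneg (by have := h0 y; linarith) (hh y)
  have hν2 : ν2 ∈ stC X := by
    refine ⟨?_, fun h hh => ?_⟩
    · simp only [ν2, wd_smul, preW_apply, mulW_apply, mul_one]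
      rw [map_sub, hν.1, ← ht]
      have : 1 - t ≠ 0 := by linarith
      field_simp
    · simp only [ν2, wd_smul, preW_apply, mulW_apply]
      refine mul_nonneg (inv_nonneg.2 (by linarith)) (hν.2 _ fun y => ?_)
      exact mul_nonneg (by have := h1 y; simp; linarith) (hh y)
  have hm1 := bary_mem hcl hcv X hXK hb hν1
  have hm2 := bary_mem hcl hcv X hXK hb hν2
  have hseg : preW (evX X hb) ν ∈ openSegment ℝ (preW (evX X hb) ν1) (preW (evX X hb) ν2) := by
    refine ⟨t, 1 - t, by linarith, by linarith, by ring, ?_⟩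
    refine wd_ext fun v => ?_
    simp only [wd_add, wd_smul, preW_apply, ν1, ν2, mulW_apply]
    have : 1 - t ≠ 0 := by linarith
    have : t ≠ 0 := by linarith
    field_simp
    rw [← map_add, ← add_mul]; simp
  have := ((mem_extremePoints_iff_left.1 hx).2 _ hm1 _ hm2 hseg)
  have h := DFunLike.congr_fun this v
  simp only [wd_smul, preW_apply, ν1, mulW_apply] at h
  rw [← h]
  have : t ≠ 0 := by linarith
  field_simp

theorem bauer {K : Set (WeakDual ℝ V)} (hcl : IsClosed K) (hcv : Convex ℝ K)
    (X : Set (WeakDual ℝ V)) [CompactSpace X] (hXK : X ⊆ K)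
    (hb : ∀ x ∈ X, ∀ v, |x v| ≤ ‖v‖) {ν : WeakDual ℝ C(X, ℝ)} (hν : ν ∈ stC X)
    (x : X) (hx : x.1 ∈ K.extremePoints ℝ) (hbx : preW (evX X hb) ν = x.1) (f : C(X, ℝ)) :
    ν f = f x := by
  have hev : ∀ v, ν (evX X hb v) = x.1 v := fun v => DFunLike.congr_fun hbx v
  have key : ∀ (f : C(X, ℝ)) (v : V), ν (f * evX X hb v) = ν f * x.1 v := by
    intro f v
    set c : ℝ := (6 * (‖f‖ + 1))⁻¹ with hc
    have hcpos : 0 < c := by positivity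
    have hbd : ∀ y, |c * f y| ≤ 1 / 6 := by
      intro y
      rw [abs_mul, abs_of_pos hcpos]
      have h1 : |f y| ≤ ‖f‖ := f.norm_coe_le_norm y
      have h2 : c * |f y| ≤ c * (‖f‖ + 1) := by gcongr; linarith
      have h3 : c * (‖f‖ + 1) = 1 / 6 := by rw [hc]; field_simp
      linarith
    have := bauer_aux hcl hcv X hXK hb hν (hbx ▸ hx) ((1 / 2 : ℝ) • (1 : C(X, ℝ)) + c • f)
      (fun y => by have := (abs_le.1 (hbd y)).1; simp; linarith)
      (fun y => by have := (abs_le.1 (hbd y)).2; simp; linarith) v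
    rw [add_mul, smul_mul_assoc, smul_mul_assoc, one_mul, map_add, map_add, map_smul, map_smul,
      map_smul, map_smul, hν.1, hev] at this
    simp only [smul_eq_mul] at this
    have h4 : c * (ν (f * evX X hb v)) = c * (ν f * x.1 v) := by linarith
    exact mul_left_cancel₀ hcpos.ne' h4
  let A : Subalgebra ℝ C(X, ℝ) :=
    { carrier := {h | ∀ f, ν (f * h) = ν f * h x}
      mul_mem' := by
        intro a b ha hb' f
        rw [← mul_assoc, hb', ha]; simp [mul_assoc]
      add_mem' := by
        intro a b ha hb' f
        rw [mul_add, map_add, hb', ha]; simp [mul_add]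
      algebraMap_mem' := by
        intro r f
        have : f * algebraMap ℝ C(X, ℝ) r = r • f := by ext y; simp [mul_comm]
        rw [this, map_smul]; simp [mul_comm] }
  have hA : A.SeparatesPoints := by
    intro y z hyz
    have : ∃ v, y.1 v ≠ z.1 v := by
      by_contra! h
      exact hyz (Subtype.ext (wd_ext h))
    obtain ⟨v, hv⟩ := this
    exact ⟨evX X hb v, ⟨evX X hb v, fun f => key f v, rfl⟩, hv⟩
  have htop := ContinuousMap.subalgebra_topologicalClosure_eq_top_of_separatesPoints A hA
  have hfm : f ∈ A.topologicalClosure := by rw [htop]; trivial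
  have hsub : closure (A : Set C(X, ℝ)) ⊆ {h | ν h = h x} := by
    refine closure_minimal (fun h hh => ?_)
      (isClosed_eq (WeakDual.toStrongDual ν).continuous (continuous_eval_const x))
    have := hh 1
    rw [one_mul, hν.1, one_mul] at this
    exact this
  exact hsub hfm

end Bdry

section Bdry2
variable {V : Type*} [NormedAddCommGroup V] [NormedSpace ℝ V]

theorem ext_inv {L : G → V →L[ℝ] V} (hL1 : L 1 = ContinuousLinearMap.id ℝ V)
    (hLm : ∀ g k, L (g * k) = (L k).comp (L g)) {K : Set (WeakDual ℝ V)}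
    (hi : ∀ g, ∀ x ∈ K, preW (L g) x ∈ K) (g : G) {x : WeakDual ℝ V}
    (hx : x ∈ K.extremePoints ℝ) : preW (L g) x ∈ K.extremePoints ℝ := by
  have hcomp : ∀ (a b : G) (y : WeakDual ℝ V), preW (L a) (preW (L b) y) = preW (L (a * b)) y := by
    intro a b y; refine wd_ext fun v => ?_
    simp [hLm]
  have hone : ∀ y : WeakDual ℝ V, preW (L 1) y = y := by
    intro y; refine wd_ext fun v => ?_
    simp [hL1]
  have hinv : ∀ (a : G) (y : WeakDual ℝ V), preW (L a⁻¹) (preW (L a) y) = y := by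
    intro a y; rw [hcomp, inv_mul_cancel, hone]
  rw [mem_extremePoints_iff_left] at hx ⊢
  refine ⟨hi g x hx.1, fun y hy z hz hseg => ?_⟩
  have := hx.2 (preW (L g⁻¹) y) (hi _ _ hy) (preW (L g⁻¹) z) (hi _ _ hz) (by
    obtain ⟨a, b, ha, hb, hab, h⟩ := hseg
    refine ⟨a, b, ha, hb, hab, ?_⟩
    rw [← map_smul, ← map_smul, ← map_add, h, hinv])
  rw [← this, hcomp, mul_inv_cancel, hone]

/-- Continuous composition by translation. -/
def LX {X : Type*} [TopologicalSpace X] [CompactSpace X] [MulAction G X]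
    [ContinuousConstSMul G X] (g : G) : C(X, ℝ) →L[ℝ] C(X, ℝ) :=
  LinearMap.mkContinuous
    { toFun := fun f => f.comp (trC g)
      map_add' := fun _ _ => rfl
      map_smul' := fun _ _ => rfl } 1 (fun f => by
        rw [one_mul, ContinuousMap.norm_le _ (norm_nonneg _)]
        exact fun x => f.norm_coe_le_norm _)

theorem LX_apply {X : Type*} [TopologicalSpace X] [CompactSpace X] [MulAction G X]
    [ContinuousConstSMul G X] (g : G) (f : C(X, ℝ)) (x : X) : LX g f x = f (g • x) := rfl

theorem bdry_approx {L : G → V →L[ℝ] V} 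
    {K : Set (WeakDual ℝ V)} (hK : MinSet L K)
    (X : Set (WeakDual ℝ V)) [CompactSpace X] [MulAction G X] [ContinuousConstSMul G X]
    (hact : ∀ (g : G) (x : X), (g • x).1 = preW (L g) x.1)
    (hXK : X ⊆ K)
    (hb : ∀ x ∈ X, ∀ v, |x v| ≤ ‖v‖) {ν : WeakDual ℝ C(X, ℝ)} (hν : ν ∈ stC X)
    (x : X) (hx : x.1 ∈ K.extremePoints ℝ) (f : C(X, ℝ)) (hfx : f x = 0)
    (ε : ℝ) (hε : 0 < ε) : ∃ g : G, ν (LX g f) < ε := by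
  by_contra! hcon
  let N : Set (WeakDual ℝ C(X, ℝ)) := Set.range fun g : G => preW (LX g) ν
  have hNst : N ⊆ stC X := by
    rintro _ ⟨g, rfl⟩
    refine ⟨?_, fun h hh => ?_⟩
    · have : LX g (1 : C(X, ℝ)) = 1 := rfl
      simp [this, hν.1]
    · exact hν.2 _ fun y => hh (g • y)
  let D := closure (convexHull ℝ N)
  have hDcv : Convex ℝ D := (convex_convexHull ℝ N).closure
  have hND : N ⊆ D := (subset_convexHull ℝ N).trans subset_closure
  have hDst : D ⊆ stC X :=
    closure_minimal (convexHull_min hNst (stSet_convex _ _)) (stSet_closed _ _)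
  have hDf : ∀ θ ∈ D, ε ≤ θ f := by
    have hcl : IsClosed {θ : WeakDual ℝ C(X, ℝ) | ε ≤ θ f} :=
      isClosed_le continuous_const (WeakDual.eval_continuous f)
    have hcv : Convex ℝ {θ : WeakDual ℝ C(X, ℝ) | ε ≤ θ f} := by
      intro y hy z hz a b ha hb hab
      simp only [Set.mem_ofPred_eq, wd_add, wd_smul] at *
      nlinarith
    exact closure_minimal (convexHull_min (by rintro _ ⟨g, rfl⟩; exact hcon g) hcv) hcl
  have hDcpt : IsCompact D :=
    (stSet_compact (stC_hP X)).of_isClosed_subset isClosed_closure hDst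
  have hDinv : ∀ (g : G), ∀ θ ∈ D, preW (LX g) θ ∈ D := by
    intro g
    have hcl : IsClosed (preW (LX (X := X) g) ⁻¹' D) :=
      isClosed_closure.preimage (preW (LX (X := X) g)).continuous
    have hcv : Convex ℝ (preW (LX (X := X) g) ⁻¹' D) :=
      hDcv.is_linear_preimage (preW (LX (X := X) g)).isLinear
    refine closure_minimal (convexHull_min ?_ hcv) hcl
    rintro _ ⟨k, rfl⟩
    refine hND ⟨g * k, wd_ext fun h => ?_⟩
    simp only [preW_apply]
    congr 1
    ext y
    simp [LX_apply, mul_smul]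
  have himg : (preW (evX X hb)) '' D = K := by
    refine hK.min _ ?_ ?_ ?_ ?_ ?_
    · rintro _ ⟨θ, hθ, rfl⟩
      exact bary_mem hK.cpt.isClosed hK.cvx X hXK hb (hDst hθ)
    · exact ⟨_, _, hND ⟨1, rfl⟩, rfl⟩
    · exact (hDcpt.image (preW (evX X hb)).continuous).isClosed
    · exact hDcv.is_linear_image (preW (evX X hb)).isLinear
    · rintro g _ ⟨θ, hθ, rfl⟩
      refine ⟨_, hDinv g θ hθ, wd_ext fun v => ?_⟩
      simp only [preW_apply]
      congr 1
      ext y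
      rw [LX_apply, evX_apply, evX_apply, hact]
      rfl
  obtain ⟨θ, hθ, hbθ⟩ := himg.symm ▸ (hXK x.2)
  have h1 := bauer hK.cpt.isClosed hK.cvx X hXK hb (hDst hθ) x hx hbθ f
  have h2 := hDf θ hθ
  linarith

theorem bdry_minSet {L : G → V →L[ℝ] V} 
    {K : Set (WeakDual ℝ V)} (hK : MinSet L K)
    (X : Set (WeakDual ℝ V)) [CompactSpace X] [MulAction G X] [ContinuousConstSMul G X]
    (hact : ∀ (g : G) (x : X), (g • x).1 = preW (L g) x.1)
    (hXK : X ⊆ K) (hX : X = closure (K.extremePoints ℝ)) (hne : Nonempty X)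
    (hb : ∀ x ∈ X, ∀ v, |x v| ≤ ‖v‖) : IsBoundary G X := by
  refine bdry_of hne fun Λ hΛ w => ?_
  have hmono : ∀ a b : C(X, ℝ), a ≤ b → Λ a ≤ Λ b := by
    intro a b hab
    have := hΛ.2 (b - a) (sub_nonneg.2 hab)
    rw [map_sub] at this; linarith
  have hbd : ∀ f, |Λ f| ≤ ‖f‖ := by
    intro f
    have h1 := hΛ.2 _ (stC_hP X f)
    have h2 := hΛ.2 _ (stC_hP X (-f))
    rw [map_sub, map_smul, hΛ.1] at h1 h2
    simp at h1 h2
    rw [abs_le]; constructor <;> linarith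
  let ν : WeakDual ℝ C(X, ℝ) := StrongDual.toWeakDual (Λ.mkContinuous 1 (by simpa using hbd))
  have hνΛ : ∀ f, ν f = Λ f := fun f => rfl
  have hν : ν ∈ stC X := hΛ
  have key : ∀ f : C(X, ℝ), 0 ≤ f → f w = 0 → ∃ g : G, Λ (f.comp (trC g)) < 1 := by
    intro f hf hfw
    have hw : w.1 ∈ closure (K.extremePoints ℝ) := hX ▸ w.2
    have hex : ∃ x : X, x.1 ∈ K.extremePoints ℝ ∧ f x < 1 / 2 := by
      have hopen : IsOpen {y : X | f y < 1 / 2} := isOpen_lt f.continuous continuous_const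
      obtain ⟨O, hO, hOe⟩ := isOpen_induced_iff.1 hopen
      have hwO : w.1 ∈ O := by
        have : w ∈ {y : X | f y < 1 / 2} := by simp [hfw]
        rw [← hOe] at this; exact this
      obtain ⟨z, hz1, hz2⟩ := mem_closure_iff.1 hw O hO hwO
      have hzX : z ∈ X := by rw [hX]; exact subset_closure hz2
      refine ⟨⟨z, hzX⟩, hz2, ?_⟩
      have : (⟨z, hzX⟩ : X) ∈ {y : X | f y < 1 / 2} := by rw [← hOe]; exact hz1
      exact this
    obtain ⟨x, hx, hfx⟩ := hex
    let f' : C(X, ℝ) := (f - (1 / 2 : ℝ) • (1 : C(X, ℝ))) ⊔ 0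
    have hf' : f' x = 0 := by
      simp [f']; linarith
    obtain ⟨g, hg⟩ := bdry_approx hK X hact hXK hb hν x hx f' hf' (1 / 2) (by norm_num)
    refine ⟨g, ?_⟩
    rw [hνΛ] at hg
    have h3 : f.comp (trC g) ≤ LX g f' + (1 / 2 : ℝ) • (1 : C(X, ℝ)) := by
      intro y
      have : f (g • y) - 1 / 2 ≤ f' (g • y) := by
        simp [f']
      change f (g • y) ≤ f' (g • y) + (1 / 2) * 1
      linarith
    have h4 := hmono _ _ h3
    rw [map_add, map_smul, hΛ.1] at h4
    simp at h4
    linarith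
  let I := {f : C(X, ℝ) // 0 ≤ f ∧ f w = 0}
  let F : I → Filter G := fun f => 𝓟 {g | Λ (f.1.comp (trC g)) < 1}
  haveI : Nonempty I := ⟨⟨0, le_rfl, rfl⟩⟩
  have hdir : Directed (· ≥ ·) F := by
    rintro ⟨f1, h1, h1w⟩ ⟨f2, h2, h2w⟩
    refine ⟨⟨f1 + f2, add_nonneg h1 h2, by simp [h1w, h2w]⟩, ?_, ?_⟩
    · refine principal_mono.2 fun g hg => lt_of_le_of_lt (hmono _ _ fun y => ?_) hg
      have := h2 (g • y)
      change f1 (g • y) ≤ f1 (g • y) + f2 (g • y)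
      simp at this
      linarith
    · refine principal_mono.2 fun g hg => lt_of_le_of_lt (hmono _ _ fun y => ?_) hg
      have := h1 (g • y)
      change f2 (g • y) ≤ f1 (g • y) + f2 (g • y)
      simp at this
      linarith
  refine ⟨iInf F, iInf_neBot_of_directed' hdir fun f => ?_, fun f => ?_⟩
  · obtain ⟨g, hg⟩ := key f.1 f.2.1 f.2.2
    exact principal_neBot_iff.2 ⟨g, hg⟩
  · rw [Metric.tendsto_nhds]
    intro ε hε
    let h : C(X, ℝ) := (2 / ε) • |f - f w • (1 : C(X, ℝ))|
    have hh : 0 ≤ h ∧ h w = 0 := by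
      constructor
      · intro y
        change 0 ≤ (2 / ε) * |f y - f w * 1|
        positivity
      · change (2 / ε) * |f w - f w * 1| = 0
        simp
    have hmem : {g : G | Λ (h.comp (trC g)) < 1} ∈ iInf F :=
      mem_iInf_of_mem (⟨h, hh⟩ : I) (mem_principal_self _)
    filter_upwards [hmem] with g hg
    have e1 : f.comp (trC g) ≤ f w • (1 : C(X, ℝ)) + (ε / 2) • h.comp (trC g) := by
      intro y
      change f (g • y) ≤ f w * 1 + (ε / 2) * ((2 / ε) * |f (g • y) - f w * 1|)
      have : (ε / 2) * ((2 / ε) * |f (g • y) - f w * 1|) = |f (g • y) - f w * 1| := by field_simp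
      rw [this]
      have := le_abs_self (f (g • y) - f w * 1)
      linarith
    have e2 : f w • (1 : C(X, ℝ)) - (ε / 2) • h.comp (trC g) ≤ f.comp (trC g) := by
      intro y
      change f w * 1 - (ε / 2) * ((2 / ε) * |f (g • y) - f w * 1|) ≤ f (g • y)
      have : (ε / 2) * ((2 / ε) * |f (g • y) - f w * 1|) = |f (g • y) - f w * 1| := by field_simp
      rw [this]
      have := neg_abs_le (f (g • y) - f w * 1)
      linarith
    have e1 := hmono _ _ e1
    have e2 := hmono _ _ e2
    rw [map_add, map_smul, map_smul, hΛ.1] at e1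
    rw [map_sub, map_smul, map_smul, hΛ.1] at e2
    simp only [smul_eq_mul] at e1 e2
    rw [Real.dist_eq, abs_lt]
    constructor <;> nlinarith [show Λ (h.comp (trC g)) < 1 from hg]

/-- The action on the closure of the extreme points. -/
theorem exists_bdry {L : G → V →L[ℝ] V} (hL1 : L 1 = ContinuousLinearMap.id ℝ V)
    (hLm : ∀ g k, L (g * k) = (L k).comp (L g)) {K : Set (WeakDual ℝ V)} (hne : K.Nonempty)
    (hc : IsCompact K) (hcv : Convex ℝ K) (hi : ∀ g, ∀ x ∈ K, preW (L g) x ∈ K)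
    (hb : ∀ x ∈ K, ∀ v, |x v| ≤ ‖v‖) :
    ∃ (X : Set (WeakDual ℝ V)) (_ : CompactSpace X) (_ : MulAction G X)
      (_ : ContinuousConstSMul G X),
      X ⊆ K ∧ (∀ (g : G) (x : X), (g • x).1 = preW (L g) x.1) ∧ IsBoundary G X := by
  obtain ⟨K0, hK0, hmin⟩ := exists_minSet L K hne hc hcv hi
  let X := closure (K0.extremePoints ℝ)
  have hXK : X ⊆ K0 := closure_minimal extremePoints_subset hmin.cpt.isClosed
  have hXinv : ∀ g : G, ∀ x ∈ X, preW (L g) x ∈ X := by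
    intro g
    have hcl : IsClosed (preW (L g) ⁻¹' X) := isClosed_closure.preimage (preW (L g)).continuous
    exact closure_minimal (fun x hx => subset_closure (ext_inv hL1 hLm hmin.inv g hx)) hcl
  haveI hcs : CompactSpace X :=
    isCompact_iff_compactSpace.1 (hmin.cpt.of_isClosed_subset isClosed_closure hXK)
  letI act : MulAction G X :=
    { smul := fun g x => ⟨preW (L g) x.1, hXinv g x.1 x.2⟩
      one_smul := fun x => Subtype.ext (wd_ext fun v => by
        change x.1 (L 1 v) = x.1 v
        rw [hL1]; rfl)
      mul_smul := fun g k x => Subtype.ext (wd_ext fun v => by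
        change x.1 (L (g * k) v) = x.1 (L k (L g v))
        rw [hLm]; rfl) }
  haveI hcont : ContinuousConstSMul G X :=
    ⟨fun g => ((preW (L g)).continuous.comp continuous_subtype_val).subtype_mk _⟩
  haveI : LocallyConvexSpace ℝ (WeakDual ℝ V) :=
    inferInstanceAs (LocallyConvexSpace ℝ (WeakBilin (topDualPairing ℝ V)))
  have hneX : Nonempty X := by
    obtain ⟨x, hx⟩ := hmin.cpt.extremePoints_nonempty hmin.ne
    exact ⟨⟨x, subset_closure hx⟩⟩
  exact ⟨X, hcs, act, hcont, hXK.trans hK0, fun _ _ => rfl,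
    bdry_minSet hmin X (fun _ _ => rfl) hXK rfl hneX
      (fun x hx => hb x (hK0 (hXK hx)))⟩

end Bdry2

section Mean

/-- Bounded real functions. -/
def BddF {S : Type*} (f : S → ℝ) : Prop := ∃ C, ∀ g, |f g| ≤ C

theorem BddF.add {S : Type*} {f h : S → ℝ} (hf : BddF f) (hh : BddF h) : BddF (f + h) := by
  obtain ⟨C, hC⟩ := hf
  obtain ⟨D, hD⟩ := hh
  exact ⟨C + D, fun g => (abs_add_le _ _).trans (add_le_add (hC g) (hD g))⟩

theorem BddF.smul {S : Type*} {f : S → ℝ} (hf : BddF f) (c : ℝ) : BddF (c • f) := by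
  obtain ⟨C, hC⟩ := hf
  exact ⟨|c| * C, fun g => by
    simp only [Pi.smul_apply, smul_eq_mul, abs_mul]
    exact mul_le_mul_of_nonneg_left (hC g) (abs_nonneg c)⟩

theorem BddF.neg {S : Type*} {f : S → ℝ} (hf : BddF f) : BddF (-f) := by
  obtain ⟨C, hC⟩ := hf
  exact ⟨C, fun g => by simpa using hC g⟩

theorem BddF.sub {S : Type*} {f h : S → ℝ} (hf : BddF f) (hh : BddF h) : BddF (f - h) := by
  rw [sub_eq_add_neg]; exact hf.add hh.neg

theorem BddF.const {S : Type*} (c : ℝ) : BddF (fun _ : S => c) := ⟨|c|, fun _ => le_rfl⟩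

theorem BddF.of_cont {S Y : Type*} [TopologicalSpace Y] [CompactSpace Y] (f : C(Y, ℝ))
    (j : S → Y) : BddF (fun s => f (j s)) := ⟨‖f‖, fun s => f.norm_coe_le_norm _⟩

theorem BddF.comp {S T : Type*} {f : S → ℝ} (hf : BddF f) (j : T → S) :
    BddF (fun t => f (j t)) := by
  obtain ⟨C, hC⟩ := hf
  exact ⟨C, fun g => hC _⟩

/-- A continuous equivariant family of means on bounded functions on `G`. -/
structure IsMeanMap (G : Type u) [Group G] (Y : Type u) [TopologicalSpace Y] [MulAction G Y]
    (q : Y → (G → ℝ) → ℝ) : Prop where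
  add : ∀ y f h, BddF f → BddF h → q y (f + h) = q y f + q y h
  smul : ∀ y (c : ℝ) f, BddF f → q y (c • f) = c * q y f
  nonneg : ∀ y f, BddF f → (∀ g, 0 ≤ f g) → 0 ≤ q y f
  one : ∀ y, q y (fun _ => 1) = 1
  equiv : ∀ (g : G) y f, BddF f → q (g • y) f = q y (fun h => f (g * h))
  cont : ∀ f, BddF f → Continuous fun y => q y f

theorem BddF.memlp {f : G → ℝ} (hf : BddF f) : Memℓp f ∞ := by
  obtain ⟨C, hC⟩ := hf
  exact memℓp_infty ⟨C, by rintro _ ⟨g, rfl⟩; exact hC g⟩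

theorem lp_bddF (v : lp (fun _ : G => ℝ) ∞) : BddF (v : G → ℝ) :=
  ⟨‖v‖, fun g => lp.norm_apply_le_norm (by simp) v g⟩

/-- Translation on bounded functions. -/
def Linf (g : G) : lp (fun _ : G => ℝ) ∞ →L[ℝ] lp (fun _ : G => ℝ) ∞ :=
  LinearMap.mkContinuous
    { toFun := fun v => ⟨fun h => v (g * h), ((lp_bddF v).comp _).memlp⟩
      map_add' := fun v w => by ext h; rfl
      map_smul' := fun c v => by ext h; rfl } 1 (fun v => by
        rw [one_mul]
        exact lp.norm_le_of_forall_le (norm_nonneg _)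
          fun h => lp.norm_apply_le_norm (by simp) v (g * h))

theorem Linf_apply (g : G) (v : lp (fun _ : G => ℝ) ∞) (h : G) : Linf g v h = v (g * h) := rfl

theorem exists_meanMap {Y : Type u} [TopologicalSpace Y] [CompactSpace Y] [T2Space Y]
    [MulAction G Y] [ContinuousConstSMul G Y] (hY : IsFurstenberg G Y) :
    ∃ q : Y → (G → ℝ) → ℝ, IsMeanMap G Y q := by
  classical
  let V := lp (fun _ : G => ℝ) ∞
  let P : Set V := {v | ∀ h, 0 ≤ v h}
  let e : V := ⟨fun _ => 1, (BddF.const 1).memlp⟩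
  have he : ∀ h, e h = 1 := fun h => rfl
  have hP : ∀ v : V, ‖v‖ • e - v ∈ P := by
    intro v h
    have := lp.norm_apply_le_norm (p := ∞) (by simp) v h
    have h2 := le_abs_self (v h)
    rw [lp.coeFn_sub, lp.coeFn_smul]
    simp only [Pi.sub_apply, Pi.smul_apply, he, smul_eq_mul]
    rw [Real.norm_eq_abs] at this
    linarith
  obtain ⟨X, hX1, hX2, hX3, hXK, hact, hbd⟩ := exists_bdry (G := G) (V := V) (L := Linf)
    (by ext v h; change v (1 * h) = v h; rw [one_mul])
    (by intro g k; ext v h; change v (g * k * h) = v (g * (k * h)); rw [mul_assoc])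
    (K := stSet P e)
    (by
      let ev : V →L[ℝ] ℝ := LinearMap.mkContinuous
        { toFun := fun v => v 1
          map_add' := fun v w => rfl
          map_smul' := fun c v => rfl } 1 (fun v => by
            rw [one_mul]
            exact lp.norm_apply_le_norm (by simp) v _)
      exact ⟨StrongDual.toWeakDual ev, rfl, fun v hv => hv 1⟩)
    (stSet_compact hP) (stSet_convex _ _)
    (by
      intro g x hx
      refine ⟨?_, fun v hv => hx.2 _ fun h => hv (g * h)⟩
      have : Linf g e = e := by ext h; rfl
      rw [preW_apply, this, hx.1])
    (fun x hx v => stSet_bound hP hx v)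
  obtain ⟨q, hqc, -, hqe⟩ := hY.2 X _ hX1 inferInstance hX2 hX3 hbd
  let Q : Y → (G → ℝ) → ℝ := fun y f => if hf : BddF f then (q y).1 (⟨f, hf.memlp⟩ : V) else 0
  have hQ : ∀ y f (hf : BddF f), Q y f = (q y).1 (⟨f, hf.memlp⟩ : V) := fun y f hf => dif_pos hf
  refine ⟨Q, ?_, ?_, ?_, ?_, ?_, ?_⟩
  · intro y f h hf hh
    rw [hQ _ _ hf, hQ _ _ hh, hQ _ _ (hf.add hh), ← map_add]; rfl
  · intro y c f hf
    rw [hQ _ _ hf, hQ _ _ (hf.smul c), ← smul_eq_mul, ← map_smul]; rfl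
  · intro y f hf h
    rw [hQ _ _ hf]
    exact (hXK (q y).2).2 _ h
  · intro y
    rw [hQ _ _ (BddF.const 1)]
    exact (hXK (q y).2).1
  · intro g y f hf
    rw [hQ _ _ hf, hQ _ _ (hf.comp _), hqe, hact]
    rfl
  · intro f hf
    have : (fun y => Q y f) = fun y => (q y).1 (⟨f, hf.memlp⟩ : V) := by
      ext y; exact hQ _ _ hf
    rw [this]
    exact (WeakDual.eval_continuous _).comp (continuous_subtype_val.comp hqc)

variable {Y : Type u} [TopologicalSpace Y] [MulAction G Y] {q : Y → (G → ℝ) → ℝ}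

theorem IsMeanMap.sub (hq : IsMeanMap G Y q) (y f h) (hf : BddF f) (hh : BddF h) :
    q y (f - h) = q y f - q y h := by
  have : f - h = f + (-1 : ℝ) • h := by ext; simp [sub_eq_add_neg]
  rw [this, hq.add _ _ _ hf (hh.smul _), hq.smul _ _ _ hh]; ring

theorem IsMeanMap.mono (hq : IsMeanMap G Y q) (y f h) (hf : BddF f) (hh : BddF h)
    (hle : ∀ g, f g ≤ h g) : q y f ≤ q y h := by
  have := hq.nonneg y _ (hh.sub hf) (fun g => by simpa using hle g)
  rw [hq.sub _ _ _ hh hf] at this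
  linarith

theorem IsMeanMap.const (hq : IsMeanMap G Y q) (y) (c : ℝ) : q y (fun _ => c) = c := by
  have h := hq.smul y c _ (BddF.const (S := G) 1)
  rw [hq.one, mul_one] at h
  have h2 : (fun _ : G => c) = c • fun _ : G => (1 : ℝ) := by ext; simp
  rw [h2, h]

theorem IsMeanMap.abs_le (hq : IsMeanMap G Y q) (y) {f} {C : ℝ} (hf : ∀ g, |f g| ≤ C) :
    |q y f| ≤ C := by
  have h1 := hq.mono y f _ ⟨C, hf⟩ (BddF.const C) (fun g => (le_abs_self _).trans (hf g))
  have h2 := hq.mono y _ f (BddF.const (-C)) ⟨C, hf⟩ (fun g => (_root_.abs_le.1 (hf g)).1)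
  rw [hq.const] at h1 h2
  exact _root_.abs_le.2 ⟨h2, h1⟩

/-- Restricting continuous functions to an orbit. -/
def io (x0 : Y) (f : C(Y, ℝ)) : G → ℝ := fun h => f (h • x0)

theorem io_bdd [CompactSpace Y] (x0 : Y) (f : C(Y, ℝ)) : BddF (io (G := G) x0 f) :=
  BddF.of_cont f _

/-- Rigidity. -/
theorem IsMeanMap.rigid [CompactSpace Y] [T2Space Y] [ContinuousConstSMul G Y]
    (hq : IsMeanMap G Y q) (hb : IsBoundary G Y) (x0 : Y) (w : Y) (f : C(Y, ℝ)) :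
    q w (io x0 f) = f w := by
  let Λ : C(Y, ℝ) →ₗ[ℝ] ℝ :=
    { toFun := fun f => (f w + q w (io x0 f)) / 2
      map_add' := fun f h => by
        have : io x0 (f + h) = io (G := G) x0 f + io x0 h := rfl
        rw [this, hq.add _ _ _ (io_bdd _ _) (io_bdd _ _)]
        simp; ring
      map_smul' := fun c f => by
        have : io x0 (c • f) = c • io (G := G) x0 f := rfl
        rw [this, hq.smul _ _ _ (io_bdd _ _)]
        simp; ring }
  have hΛ : IsSt Λ := by
    constructor
    · have : io (G := G) x0 (1 : C(Y, ℝ)) = fun _ => 1 := rfl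
      change ((1 : C(Y, ℝ)) w + q w (io x0 1)) / 2 = 1
      rw [this, hq.one]; simp
    · intro f hf
      have h1 := hq.nonneg w _ (io_bdd x0 f) (fun g => hf (g • x0))
      have h2 := hf w
      change 0 ≤ (f w + q w (io x0 f)) / 2
      simp at h2
      linarith
  obtain ⟨U, hU⟩ := bdry_filter hb Λ hΛ w
  obtain ⟨z, -, hz⟩ := isCompact_univ.ultrafilter_le_nhds' (U.map (fun g : G => g • w))
    Filter.univ_mem
  have hz' : Tendsto (fun g : G => g • w) (U : Filter G) (𝓝 z) := hz
  have key : ∀ f : C(Y, ℝ), (f z + q z (io x0 f)) / 2 = f w := by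
    intro f
    refine tendsto_nhds_unique ?_ (hU f)
    have h1 : ∀ g : G, Λ (f.comp (trC g)) = (f (g • w) + q (g • w) (io x0 f)) / 2 := by
      intro g
      change (f (g • w) + q w (io x0 (f.comp (trC g)))) / 2 = _
      rw [hq.equiv _ _ _ (io_bdd _ _)]
      congr 3
      ext h
      simp [io, trC, mul_smul]
    simp_rw [h1]
    exact (((f.continuous.tendsto z).comp hz').add
      (((hq.cont _ (io_bdd x0 f)).tendsto z).comp hz')).div_const 2
  have key0 : ∀ f : C(Y, ℝ), 0 ≤ f → f w = 0 → f z = 0 ∧ q z (io x0 f) = 0 := by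
    intro f hf hfw
    have h1 := hq.nonneg z _ (io_bdd x0 f) (fun g => hf (g • x0))
    have h2 := hf z
    have h3 := key f
    simp at h2
    constructor <;> linarith
  have hzw : z = w := by
    by_contra hne
    obtain ⟨f, hf1, hf2, hf3⟩ := exists_continuous_zero_one_of_isClosed
      (isClosed_singleton (x := w)) (isClosed_singleton (x := z)) (by simpa using Ne.symm hne)
    have := (key0 f (fun y => (hf3 y).1) (hf1 rfl)).1
    rw [hf2 rfl] at this
    simp at this
  have := key f
  rw [hzw] at this
  linarith

end Mean

section Frolik
variable {Y : Type u} [TopologicalSpace Y] [MulAction G Y] {q : Y → (G → ℝ) → ℝ}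

open Classical in
theorem BddF.ind {S : Type*} (E : Set S) : BddF (fun s => if s ∈ E then (1 : ℝ) else 0) :=
  ⟨1, fun s => by by_cases h : s ∈ E <;> simp [h]⟩

open Classical in
theorem closure_open [CompactSpace Y] [T2Space Y] [ContinuousConstSMul G Y]
    (hq : IsMeanMap G Y q) (hb : IsBoundary G Y) (U : Set Y) (hU : IsOpen U) :
    IsOpen (closure U) := by
  obtain ⟨x0⟩ := hb.1
  let e : G → ℝ := fun g => if g ∈ {g : G | g • x0 ∈ U} then 1 else 0
  have he : BddF e := BddF.ind _
  have hc := hq.cont e he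
  have h1 : ∀ y ∈ closure U, 1 ≤ q y e := by
    have hcl : IsClosed {y | 1 ≤ q y e} := isClosed_le continuous_const hc
    refine closure_minimal (fun y hy => ?_) hcl
    obtain ⟨f, hf1, hf2, hf3⟩ := exists_continuous_zero_one_of_isClosed
      hU.isClosed_compl (isClosed_singleton (x := y)) (by simpa using hy)
    have := hq.mono y (io x0 f) e (io_bdd _ _) he (fun g => by
      by_cases hg : g • x0 ∈ U
      · simp only [e, Set.mem_ofPred_eq, hg, if_true]; exact (hf3 _).2
      · simp only [e, Set.mem_ofPred_eq, hg, if_false, io]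
        exact le_of_eq (hf1 hg))
    rw [hq.rigid hb, hf2 rfl] at this
    exact this
  have h2 : ∀ y, y ∉ closure U → q y e ≤ 0 := by
    intro y hy
    obtain ⟨f, hf1, hf2, hf3⟩ := exists_continuous_zero_one_of_isClosed
      (isClosed_closure (s := U)) (isClosed_singleton (x := y)) (by simpa using hy)
    have := hq.mono y (e + io x0 f) (fun _ => 1) (he.add (io_bdd _ _)) (BddF.const 1) (fun g => by
      by_cases hg : g • x0 ∈ U
      · simp only [e, Pi.add_apply, Set.mem_ofPred_eq, hg, if_true, io]
        rw [hf1 (subset_closure hg)]; simp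
      · simp only [e, Pi.add_apply, Set.mem_ofPred_eq, hg, if_false, io]
        simpa using (hf3 _).2)
    rw [hq.add _ _ _ he (io_bdd _ _), hq.rigid hb, hf2 rfl, hq.one] at this
    simp at this
    exact this
  have : closure U = {y | 1 / 2 < q y e} := by
    ext y
    constructor
    · intro hy
      have := h1 y hy
      simp only [Set.mem_ofPred_eq]; linarith
    · intro hy
      by_contra hn
      have := h2 y hn
      simp only [Set.mem_ofPred_eq] at hy; linarith
  rw [this]
  exact isOpen_lt continuous_const hc

theorem fix_open [T2Space Y] [ContinuousConstSMul G Y]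
    (hED : ∀ U : Set Y, IsOpen U → IsOpen (closure U)) (s : G) : IsOpen {y : Y | s • y = y} := by
  obtain ⟨U, hU⟩ := zorn_subset {U : Set Y | IsOpen U ∧ ∀ y ∈ U, s • y ∉ U} (by
    intro c hc hch
    refine ⟨⋃₀ c, ⟨isOpen_sUnion fun t ht => (hc ht).1, ?_⟩, fun t ht => Set.subset_sUnion_of_mem ht⟩
    rintro y ⟨t, ht, hyt⟩ ⟨t', ht', hyt'⟩
    rcases hch.total ht ht' with h | h
    · exact (hc ht').2 y (h hyt) hyt'
    · exact (hc ht).2 y hyt (h hyt'))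
  have hUo := hU.prop.1
  have hUd := hU.prop.2
  have hcl : closure U ⊆ U := by
    refine hU.le_of_ge ⟨hED U hUo, ?_⟩ subset_closure
    intro y hy hsy
    have ho : IsOpen ((fun y : Y => s • y) ⁻¹' closure U) :=
      (hED U hUo).preimage (continuous_const_smul s)
    obtain ⟨z, hz1, hz2⟩ := mem_closure_iff.1 hy _ ho hsy
    have ho2 : IsOpen ((fun y : Y => s⁻¹ • y) ⁻¹' U) :=
      hUo.preimage (continuous_const_smul s⁻¹)
    obtain ⟨v, hv1, hv2⟩ := mem_closure_iff.1 hz1 _ ho2 (by simpa using hz2)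
    exact hUd (s⁻¹ • v) hv1 (by simpa using hv2)
  have hUc : IsClosed U := by
    rw [← hcl.antisymm subset_closure]; exact isClosed_closure
  have hc1 : IsClosed ((fun y : Y => s • y) ⁻¹' U) := hUc.preimage (continuous_const_smul s)
  have hc2 : IsClosed ((fun y : Y => s⁻¹ • y) ⁻¹' U) := hUc.preimage (continuous_const_smul s⁻¹)
  have heq : {y : Y | s • y = y} =
      (U ∪ (fun y : Y => s • y) ⁻¹' U ∪ (fun y : Y => s⁻¹ • y) ⁻¹' U)ᶜ := by
    ext y
    simp only [Set.mem_ofPred_eq, Set.mem_compl_iff, Set.mem_union, Set.mem_preimage, not_or]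
    constructor
    · intro hy
      have hyU : y ∉ U := fun h => hUd y h (hy.symm ▸ h)
      have : s⁻¹ • y = y := by rw [inv_smul_eq_iff, hy]
      rw [hy, this]
      exact ⟨⟨hyU, hyU⟩, hyU⟩
    · rintro ⟨⟨h1, h2⟩, h3⟩
      by_contra hne
      obtain ⟨A, B, hA, hB, hyA, hyB, hAB⟩ := t2_separation hne
      let W : Set Y := ((fun y : Y => s • y) ⁻¹' A ∩ B) ∩
        (((fun y : Y => s • y) ⁻¹' U)ᶜ ∩ ((fun y : Y => s⁻¹ • y) ⁻¹' U)ᶜ)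
      have hW : IsOpen W := ((hA.preimage (continuous_const_smul s)).inter hB).inter
        (hc1.isOpen_compl.inter hc2.isOpen_compl)
      have hyW : y ∈ W := ⟨⟨hyA, hyB⟩, h2, h3⟩
      have : U ∪ W ⊆ U := by
        refine hU.le_of_ge ⟨hUo.union hW, ?_⟩ Set.subset_union_left
        rintro v (hv | hv) (hs | hs)
        · exact hUd v hv hs
        · exact hs.2.2 (by simpa using hv)
        · exact hv.2.1 hs
        · exact Set.disjoint_left.1 hAB hv.1.1 hs.1.2
      exact h1 (this (Or.inr hyW))
  rw [heq]
  exact ((hUc.union hc1).union hc2).isOpen_compl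

end Frolik

section Amen

theorem lregE_apply (g : G) (f : ℓ²(G, ℂ)) (h : G) : lregE g f h = f (g⁻¹ * h) := by
  unfold lregE; rfl

theorem lreg_apply (g : G) (f : ℓ²(G, ℂ)) (h : G) : lreg g f h = f (g⁻¹ * h) := by
  unfold lreg; exact lregE_apply g f h

theorem uu_coe (g : G) : ((uu g : redCstar G) : ℓ²(G, ℂ) →L[ℂ] ℓ²(G, ℂ)) = lreg g := by
  unfold uu; rfl

theorem lreg_one : lreg (1 : G) = 1 := by
  ext f h; rw [lreg_apply]; simp

theorem lreg_mul (g k : G) : lreg (g * k) = lreg g * lreg k := by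
  ext f h
  change _ = (lreg g (lreg k f)) h
  rw [lreg_apply, lreg_apply, lreg_apply]; simp [mul_assoc]

theorem lreg_norm (g : G) (f : ℓ²(G, ℂ)) : ‖lreg g f‖ = ‖f‖ := by
  unfold lreg
  exact (lregE g).norm_map f

theorem lreg_star (g : G) : star (lreg g) = lreg g⁻¹ := by
  rw [ContinuousLinearMap.star_eq_adjoint]
  symm
  rw [ContinuousLinearMap.eq_adjoint_iff]
  intro x y
  have : inner ℂ (lreg g (lreg g⁻¹ x)) (lreg g y) = inner ℂ (lreg g⁻¹ x) y := by
    have h : ∀ z, lreg g z = lregE g z := fun z => by unfold lreg; rfl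
    rw [h, h, LinearIsometryEquiv.inner_map_map]
  rw [← this]
  congr 1
  have : (lreg g * lreg g⁻¹) x = x := by rw [← lreg_mul, mul_inv_cancel, lreg_one]; rfl
  exact this

theorem uu_one : (uu (1 : G)) = 1 := Subtype.ext (by rw [uu_coe, lreg_one]; rfl)
theorem uu_mul (g k : G) : uu (g * k) = uu g * uu k :=
  Subtype.ext (by rw [uu_coe, lreg_mul, ← uu_coe, ← uu_coe]; rfl)
theorem uu_star (g : G) : star (uu g) = uu g⁻¹ :=
  Subtype.ext (by
    change star ((uu g : redCstar G) : ℓ²(G, ℂ) →L[ℂ] ℓ²(G, ℂ)) = _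
    rw [uu_coe, uu_coe, lreg_star])

/-- States on a normed star algebra. -/
structure IsSta {A : Type*} [NormedRing A] [StarRing A] [NormedAlgebra ℂ A] (φ : A → ℂ) : Prop where
  add : ∀ a b, φ (a + b) = φ a + φ b
  smul : ∀ (c : ℂ) a, φ (c • a) = c * φ a
  one : φ 1 = 1
  pos : ∀ b, 0 ≤ φ (star b * b)
  bound : ∀ a, ‖φ a‖ ≤ ‖a‖

theorem IsSta.lim {A : Type*} [NormedRing A] [StarRing A] [NormedAlgebra ℂ A] {I : Type*}
    (U : Ultrafilter I) (φ : I → A → ℂ) (h : ∀ i, IsSta (φ i)) :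
    ∃ ψ : A → ℂ, IsSta ψ ∧ ∀ a, Tendsto (fun i => φ i a) (U : Filter I) (𝓝 (ψ a)) := by
  have : ∀ a, ∃ l : ℂ, Tendsto (fun i => φ i a) (U : Filter I) (𝓝 l) := by
    intro a
    obtain ⟨l, -, hl⟩ := (isCompact_closedBall (0 : ℂ) ‖a‖).ultrafilter_le_nhds'
      (U.map fun i => φ i a) (by
        change (fun i => φ i a) ⁻¹' _ ∈ U
        refine Filter.mem_of_superset (Filter.univ_mem) fun i _ => ?_
        simpa using (h i).bound a)
    exact ⟨l, hl⟩
  choose ψ hψ using this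
  refine ⟨ψ, ⟨fun a b => ?_, fun c a => ?_, ?_, fun b => ?_, fun a => ?_⟩, hψ⟩
  · refine tendsto_nhds_unique (hψ (a + b)) ?_
    simp_rw [(h _).add]
    exact (hψ a).add (hψ b)
  · refine tendsto_nhds_unique (hψ (c • a)) ?_
    simp_rw [(h _).smul]
    exact (hψ a).const_mul c
  · refine tendsto_nhds_unique (hψ 1) ?_
    simp_rw [(h _).one]
    exact tendsto_const_nhds
  · exact ge_of_tendsto' (hψ _) fun i => (h i).pos b
  · exact le_of_tendsto' (hψ a).norm fun i => (h i).bound a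

theorem folner (m : (G → ℝ) → ℝ)
    (madd : ∀ f h, BddF f → BddF h → m (f + h) = m f + m h)
    (msmul : ∀ (c : ℝ) f, BddF f → m (c • f) = c * m f)
    (mnonneg : ∀ f, BddF f → (∀ g, 0 ≤ f g) → 0 ≤ m f)
    (mone : m (fun _ => 1) = 1)
    (F : Finset G) (minv : ∀ t ∈ F, ∀ f, BddF f → m (fun h => f (t * h)) = m f)
    (ε : ℝ) (hε : 0 < ε) :
    ∃ p : G → ℝ, (∀ g, 0 ≤ p g) ∧ HasSum p 1 ∧
      ∀ t ∈ F, Summable (fun g => |p (t⁻¹ * g) - p g|) ∧ ∑' g, |p (t⁻¹ * g) - p g| < ε := by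
  classical
  let S : Set (lp (fun _ : F × G => ℝ) 1) := {v | ∃ p : G → ℝ, (∀ g, 0 ≤ p g) ∧ HasSum p 1 ∧
    ∀ (t : F) g, v (t, g) = p (t.1⁻¹ * g) - p g}
  have hScv : Convex ℝ S := by
    rintro v ⟨p, hp0, hp1, hp⟩ w ⟨r, hr0, hr1, hr⟩ a b ha hb hab
    refine ⟨fun g => a * p g + b * r g, fun g => ?_, ?_, fun t g => ?_⟩
    · have := hp0 g; have := hr0 g; positivity
    · have := (hp1.mul_left a).add (hr1.mul_left b)
      rwa [mul_one, mul_one, hab] at this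
    · rw [lp.coeFn_add, lp.coeFn_smul, lp.coeFn_smul]
      simp only [Pi.add_apply, Pi.smul_apply, smul_eq_mul, hp, hr]; ring
  have h0 : (0 : lp (fun _ : F × G => ℝ) 1) ∈ closure S := by
    by_contra hn
    obtain ⟨f, c, hc0, hc⟩ := geometric_hahn_banach_point_closed hScv.closure isClosed_closure hn
    rw [map_zero] at hc0
    let u : F → G → ℝ := fun t g => f (lp.single 1 (t, g) (1 : ℝ))
    have hu : ∀ t, BddF (u t) := fun t => ⟨‖f‖, fun g => by
      have := f.le_opNorm (lp.single 1 (t, g) (1 : ℝ))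
      rw [lp.norm_single (by simp)] at this
      simpa using this⟩
    let d : G → lp (fun _ : F × G => ℝ) 1 := fun g =>
      ∑ t : F, (lp.single 1 (t, t.1 * g) (1 : ℝ) - lp.single 1 (t, g) (1 : ℝ))
    have hd : ∀ g, d g ∈ S := by
      intro g
      refine ⟨Pi.single g 1, fun h => ?_, ?_, fun t h => ?_⟩
      · by_cases hh : h = g
        · subst hh; simp
        · simp [hh]
      · simpa using hasSum_pi_single g (1 : ℝ)
      · simp only [d]
        rw [lp.coeFn_sum, Finset.sum_apply, Finset.sum_eq_single t]
        · rw [lp.coeFn_sub, Pi.sub_apply, lp.single_apply, lp.single_apply]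
          simp [Pi.single_apply, inv_mul_eq_iff_eq_mul]
        · intro t' _ ht'
          rw [lp.coeFn_sub, Pi.sub_apply, lp.single_apply, lp.single_apply]
          simp [Pi.single_apply, Ne.symm ht']
        · simp
    have hfd : ∀ g, c < ∑ t : F, (u t (t.1 * g) - u t g) := by
      intro g
      have := hc _ (subset_closure (hd g))
      simpa [d, map_sum, map_sub] using this
    have hsum : ∀ s : Finset F, BddF (fun g => ∑ t ∈ s, (u t (t.1 * g) - u t g)) ∧
        m (fun g => ∑ t ∈ s, (u t (t.1 * g) - u t g)) = 0 := by
      intro s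
      induction s using Finset.induction_on with
      | empty =>
        refine ⟨by simpa using BddF.const (S := G) 0, ?_⟩
        have := msmul 0 _ (BddF.const (S := G) 0)
        rw [zero_mul] at this
        rw [← this]; congr 1; ext; simp
      | insert t s ht ih =>
        have e : (fun g => ∑ t ∈ insert t s, (u t (t.1 * g) - u t g)) =
            ((fun g => u t (t.1 * g)) + (-1 : ℝ) • u t) +
              fun g => ∑ t ∈ s, (u t (t.1 * g) - u t g) := by
          ext g
          rw [Finset.sum_insert ht]; simp; ring
        have hb1 : BddF ((fun g => u t (t.1 * g)) + (-1 : ℝ) • u t) :=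
          ((hu t).comp _).add ((hu t).smul _)
        rw [e]
        refine ⟨hb1.add ih.1, ?_⟩
        rw [madd _ _ hb1 ih.1, ih.2, madd _ _ ((hu t).comp _) ((hu t).smul _),
          msmul _ _ (hu t), minv t.1 t.2 _ (hu t)]
        ring
    obtain ⟨hb, hm⟩ := hsum Finset.univ
    have h1 := mnonneg _ (hb.add ((BddF.const (S := G) 1).smul (-c))) (fun g => by
      have := hfd g
      simp only [Pi.add_apply, Pi.smul_apply, smul_eq_mul]; linarith)
    rw [madd _ _ hb ((BddF.const (S := G) 1).smul (-c)), hm, msmul _ _ (BddF.const 1), mone] at h1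
    linarith
  obtain ⟨v, ⟨p, hp0, hp1, hp⟩, hv⟩ := Metric.mem_closure_iff.1 h0 ε hε
  refine ⟨p, hp0, hp1, fun t ht => ?_⟩
  have hs : Summable fun i : F × G => ‖v i‖ := by
    simpa using (memℓp_gen_iff (p := 1) (by norm_num)).1 (lp.memℓp v)
  have hnorm : ‖v‖ = ∑' i, ‖v i‖ := by
    simpa using lp.norm_eq_tsum_rpow (p := 1) (by norm_num) v
  have hinj : Function.Injective (fun g : G => ((⟨t, ht⟩ : F), g)) := fun a b h => by simpa using h
  have he : (fun g => |p (t⁻¹ * g) - p g|) = (fun i => ‖v i‖) ∘ (fun g : G => ((⟨t, ht⟩ : F), g)) := by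
    ext g; simp [hp]
  have hs2 : Summable (fun g => |p (t⁻¹ * g) - p g|) := by
    rw [he]; exact hs.comp_injective hinj
  refine ⟨hs2, ?_⟩
  rw [dist_zero_left, hnorm] at hv
  refine lt_of_le_of_lt ?_ hv
  rw [he]
  exact tsum_comp_le_tsum_of_inj hs (fun _ => norm_nonneg _) hinj

theorem almost_inv (p : G → ℝ) (hp0 : ∀ g, 0 ≤ p g) (hp1 : HasSum p 1) :
    ∃ ξ : ℓ²(G, ℂ), ‖ξ‖ = 1 ∧ ∀ t : G, Summable (fun g => |p (t⁻¹ * g) - p g|) →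
      ‖lreg t ξ - ξ‖ ^ 2 ≤ ∑' g, |p (t⁻¹ * g) - p g| := by
  have hsq : ∀ x : ℝ, 0 ≤ x → ‖((√x : ℝ) : ℂ)‖ ^ (2 : ℝ≥0∞).toReal = x := by
    intro x hx
    simp [abs_of_nonneg (Real.sqrt_nonneg _), Real.sq_sqrt hx]
  have hmem : Memℓp (fun g => ((√(p g) : ℝ) : ℂ)) 2 := by
    refine memℓp_gen ?_
    simp_rw [hsq _ (hp0 _)]
    exact hp1.summable
  let ξ : ℓ²(G, ℂ) := ⟨_, hmem⟩
  have hξ : ∀ g, ξ g = ((√(p g) : ℝ) : ℂ) := fun g => rfl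
  refine ⟨ξ, ?_, fun t ht => ?_⟩
  · rw [lp.norm_eq_tsum_rpow (by norm_num)]
    simp_rw [hξ, hsq _ (hp0 _)]
    rw [hp1.tsum_eq]; simp
  · have h1 : ‖lreg t ξ - ξ‖ ^ 2 = ∑' g, ‖(lreg t ξ - ξ) g‖ ^ 2 := by
      have := lp.norm_rpow_eq_tsum (p := 2) (by norm_num) (lreg t ξ - ξ)
      simpa using this
    rw [h1]
    have hs1 : Summable fun g => ‖(lreg t ξ - ξ) g‖ ^ 2 := by
      have := (memℓp_gen_iff (p := 2) (by norm_num)).1 (lp.memℓp (lreg t ξ - ξ))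
      simpa using this
    refine hs1.tsum_le_tsum (fun g => ?_) ht
    rw [lp.coeFn_sub, Pi.sub_apply, lreg_apply, hξ, hξ, ← Complex.ofReal_sub, Complex.norm_real,
      Real.norm_eq_abs, sq_abs]
    set a := √(p (t⁻¹ * g)) with ha
    set b := √(p g) with hb
    have ea : p (t⁻¹ * g) = a ^ 2 := (Real.sq_sqrt (hp0 _)).symm
    have eb : p g = b ^ 2 := (Real.sq_sqrt (hp0 _)).symm
    have ha0 : 0 ≤ a := Real.sqrt_nonneg _
    have hb0 : 0 ≤ b := Real.sqrt_nonneg _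
    rw [ea, eb, show a ^ 2 - b ^ 2 = (a - b) * (a + b) by ring, abs_mul, abs_of_nonneg (add_nonneg ha0 hb0),
      ← sq_abs, sq]
    refine mul_le_mul_of_nonneg_left ?_ (abs_nonneg _)
    rw [abs_le]; constructor <;> linarith

theorem vec_state (ξ : ℓ²(G, ℂ)) (hξ : ‖ξ‖ = 1) :
    IsSta (fun a : redCstar G => inner ℂ ξ ((a : ℓ²(G, ℂ) →L[ℂ] ℓ²(G, ℂ)) ξ)) where
  add a b := by
    change inner ℂ ξ ((a : ℓ²(G, ℂ) →L[ℂ] ℓ²(G, ℂ)) ξ + (b : ℓ²(G, ℂ) →L[ℂ] ℓ²(G, ℂ)) ξ) = _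
    rw [inner_add_right]
  smul c a := by
    change inner ℂ ξ (c • (a : ℓ²(G, ℂ) →L[ℂ] ℓ²(G, ℂ)) ξ) = _
    rw [inner_smul_right]
  one := by
    change inner ℂ ξ ξ = 1
    rw [inner_self_eq_norm_sq_to_K, hξ]; simp
  pos b := by
    change 0 ≤ inner ℂ ξ (ContinuousLinearMap.adjoint (b : ℓ²(G, ℂ) →L[ℂ] ℓ²(G, ℂ))
      ((b : ℓ²(G, ℂ) →L[ℂ] ℓ²(G, ℂ)) ξ))
    rw [ContinuousLinearMap.adjoint_inner_right, inner_self_eq_norm_sq_to_K]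
    rw [← RCLike.ofReal_pow]
    exact Complex.zero_le_real.2 (sq_nonneg ‖(b : ℓ²(G, ℂ) →L[ℂ] ℓ²(G, ℂ)) ξ‖)
  bound a := by
    refine (norm_inner_le_norm _ _).trans ?_
    have := (a : ℓ²(G, ℂ) →L[ℂ] ℓ²(G, ℂ)).le_opNorm ξ
    rw [hξ] at this ⊢
    rw [one_mul]
    rw [mul_one] at this
    exact this

theorem exists_amen_state {Y : Type u} [TopologicalSpace Y] [MulAction G Y] {q : Y → (G → ℝ) → ℝ}
    (hq : IsMeanMap G Y q) (x0 : Y) :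
    ∃ φ : redCstar G → ℂ, IsSta φ ∧ ∀ t : G, t • x0 = x0 → φ (uu t) = 1 := by
  classical
  have key : ∀ i : Finset G × ℕ, ∃ ξ : ℓ²(G, ℂ), ‖ξ‖ = 1 ∧
      ∀ t ∈ i.1, t • x0 = x0 → ‖lreg t ξ - ξ‖ ^ 2 ≤ 1 / ((i.2 : ℝ) + 1) := by
    rintro ⟨F, n⟩
    obtain ⟨p, hp0, hp1, hp⟩ := folner (q x0) (hq.add x0) (hq.smul x0) (hq.nonneg x0) (hq.one x0)
      (F.filter fun t => t • x0 = x0) (fun t ht f hf => by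
        have h := hq.equiv t x0 f hf
        rw [(Finset.mem_filter.1 ht).2] at h
        exact h.symm) (1 / ((n : ℝ) + 1)) (by positivity)
    obtain ⟨ξ, hξ, h⟩ := almost_inv p hp0 hp1
    refine ⟨ξ, hξ, fun t ht htx => ?_⟩
    have := hp t (Finset.mem_filter.2 ⟨ht, htx⟩)
    exact (h t this.1).trans this.2.le
  choose ξ hξ hinv using key
  let U : Ultrafilter (Finset G × ℕ) := Ultrafilter.of atTop
  have hU : (U : Filter (Finset G × ℕ)) ≤ atTop := Ultrafilter.of_le _
  obtain ⟨φ, hφ, hlim⟩ := IsSta.lim U _ (fun i => vec_state (ξ i) (hξ i))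
  refine ⟨φ, hφ, fun t ht => ?_⟩
  refine tendsto_nhds_unique (hlim (uu t)) (Tendsto.mono_left ?_ hU)
  rw [tendsto_iff_norm_sub_tendsto_zero]
  have h2 : Tendsto (fun i : Finset G × ℕ => √(1 / ((i.2 : ℝ) + 1))) atTop (𝓝 0) := by
    have h3 : Tendsto (fun i : Finset G × ℕ => i.2) atTop atTop := by
      rw [← prod_atTop_atTop_eq]; exact tendsto_snd
    have h4 := (Real.continuous_sqrt.tendsto 0).comp
      ((tendsto_one_div_add_atTop_nhds_zero_nat (𝕜 := ℝ)).comp h3)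
    rw [Real.sqrt_zero] at h4
    exact h4
  refine squeeze_zero' (Eventually.of_forall fun _ => norm_nonneg _) ?_ h2
  filter_upwards [eventually_ge_atTop (({t} : Finset G), 0)] with i hi
  have hti : t ∈ i.1 := hi.1 (by simp)
  have h5 := hinv i t hti ht
  rw [uu_coe]
  have h6 : inner ℂ (ξ i) (lreg t (ξ i)) - 1 = inner ℂ (ξ i) (lreg t (ξ i) - ξ i) := by
    rw [inner_sub_right, inner_self_eq_norm_sq_to_K, hξ]; simp
  rw [h6]
  refine (norm_inner_le_norm _ _).trans ?_
  rw [hξ, one_mul]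
  exact Real.le_sqrt_of_sq_le h5

end Amen

section Conv

theorem tauF_uu (s : G) (hs : s ≠ 1) : tauF G (uu s) = 0 := by
  classical
  unfold tauF
  rw [uu_coe]
  have h1 : (deltaOne : ℓ²(G, ℂ)) = lp.single 2 (1 : G) (1 : ℂ) := by
    unfold deltaOne
    congr
  rw [h1, lp.inner_single_left, lreg_apply, lp.single_apply]
  simp [hs]

theorem tauF_one : tauF G 1 = 1 := by
  classical
  unfold tauF
  have h1 : (deltaOne : ℓ²(G, ℂ)) = lp.single 2 (1 : G) (1 : ℂ) := by
    unfold deltaOne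
    congr
  change inner ℂ deltaOne deltaOne = _
  rw [h1, lp.inner_single_left, lp.single_apply]
  simp

open scoped Matrix.Norms.L2Operator MatrixOrder in
theorem cont_sqrt {Y : Type u} [TopologicalSpace Y] {n : ℕ}
    (A : Y → Matrix (Fin n) (Fin n) ℂ) (hc : ∀ i j, Continuous fun y => A y i j)
    (hA : ∀ y, (A y).PosSemidef) :
    ∃ P : Matrix (Fin n) (Fin n) C(Y, ℂ), ∀ y i j, (star P * P) i j y = A y i j := by
  have hcA : Continuous A := continuous_matrix hc
  have h0 : ∀ y, 0 ≤ A y := fun y => (hA y).nonneg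
  have hs : Continuous fun y => cfc NNReal.sqrt (A y) :=
    Continuous.cfc_nnreal_of_mem_nhdsSet (s := Set.univ) NNReal.sqrt Filter.univ_mem hcA h0
      (NNReal.continuous_sqrt.continuousOn)
  let P : Matrix (Fin n) (Fin n) C(Y, ℂ) :=
    Matrix.of fun i j => ⟨fun y => cfc NNReal.sqrt (A y) i j, hs.matrix_elem i j⟩
  refine ⟨P, fun y i j => ?_⟩
  have h1 : star (cfc NNReal.sqrt (A y)) * cfc NNReal.sqrt (A y) = A y := by
    have hsa : star (cfc NNReal.sqrt (A y)) = cfc NNReal.sqrt (A y) :=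
      (IsSelfAdjoint.of_nonneg (cfc_predicate NNReal.sqrt (A y))).star_eq
    rw [hsa, ← CFC.sqrt_eq_cfc]
    exact CFC.sqrt_mul_sqrt_self (A y) (h0 y)
  conv_rhs => rw [← h1]
  rw [Matrix.mul_apply, Matrix.mul_apply, ContinuousMap.sum_apply]
  rfl

theorem psd_of_nonneg {n : ℕ} (A : Matrix (Fin n) (Fin n) ℂ)
    (h : ∀ c : Fin n → ℂ, 0 ≤ star c ⬝ᵥ (A.mulVec c)) : A.PosSemidef := by
  rw [← Matrix.isPositive_toEuclideanLin_iff, LinearMap.isPositive_iff_complex]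
  intro x
  have h1 : inner ℂ (Matrix.toEuclideanLin A x) x = star (star (x.ofLp) ⬝ᵥ (A.mulVec x.ofLp)) := by
    rw [← inner_conj_symm, EuclideanSpace.inner_eq_star_dotProduct, dotProduct_comm]
    rfl
  obtain ⟨h2, h3⟩ := Complex.le_def.1 (h x.ofLp)
  rw [h1]
  refine ⟨?_, ?_⟩
  · apply Complex.ext
    · simp
    · simp at h3 ⊢; exact h3.symm
  · simpa using h2

theorem uu_norm (g : G) : ‖uu g‖ ≤ 1 := by
  change ‖((uu g : redCstar G) : ℓ²(G, ℂ) →L[ℂ] ℓ²(G, ℂ))‖ ≤ 1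
  rw [uu_coe]
  exact ContinuousLinearMap.opNorm_le_bound _ zero_le_one fun f => by rw [lreg_norm, one_mul]

/-- The orbit function of an element under a state. -/
def FF (φ : redCstar G → ℂ) (a : redCstar G) : G → ℂ := fun g => φ (uu g⁻¹ * a * uu g)

variable {φ : redCstar G → ℂ}

theorem FF_norm (hφ : IsSta φ) (a : redCstar G) (g : G) : ‖FF φ a g‖ ≤ ‖a‖ := by
  refine (hφ.bound _).trans ((norm_mul_le _ _).trans ?_)
  have h1 := norm_mul_le (uu g⁻¹) a
  have h2 := uu_norm (G := G) g
  have h3 := uu_norm (G := G) g⁻¹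
  have h4 := norm_nonneg a
  have h5 := norm_nonneg (uu g)
  have h6 : ‖uu g⁻¹ * a‖ ≤ ‖a‖ := h1.trans (mul_le_of_le_one_left h4 h3)
  exact (mul_le_of_le_one_right (norm_nonneg _) h2).trans h6

theorem FF_add (hφ : IsSta φ) (a b : redCstar G) : FF φ (a + b) = FF φ a + FF φ b := by
  ext g; simp [FF, mul_add, add_mul, hφ.add]

theorem FF_smul (hφ : IsSta φ) (c : ℂ) (a : redCstar G) : FF φ (c • a) = c • FF φ a := by
  ext g; simp [FF, hφ.smul]

theorem FF_pos (hφ : IsSta φ) (b : redCstar G) (g : G) : 0 ≤ FF φ (star b * b) g := by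
  have : uu g⁻¹ * (star b * b) * uu g = star (b * uu g) * (b * uu g) := by
    rw [star_mul, uu_star]; simp only [mul_assoc]
  rw [FF, this]
  exact hφ.pos _

theorem FF_equiv (a : redCstar G) (g h : G) : FF φ (uu g * a * uu g⁻¹) h = FF φ a (g⁻¹ * h) := by
  simp only [FF, mul_inv_rev, inv_inv, uu_mul, mul_assoc]

theorem FF_one (hφ : IsSta φ) : FF φ 1 = 1 := by
  ext g; simp [FF, ← uu_mul, uu_one, hφ.one]

variable {Y : Type u} [TopologicalSpace Y] [CompactSpace Y] [MulAction G Y] {q : Y → (G → ℝ) → ℝ}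

theorem FF_re (hφ : IsSta φ) (a : redCstar G) : BddF (fun g => (FF φ a g).re) :=
  ⟨‖a‖, fun g => (Complex.abs_re_le_norm _).trans (FF_norm hφ a g)⟩
theorem FF_im (hφ : IsSta φ) (a : redCstar G) : BddF (fun g => (FF φ a g).im) :=
  ⟨‖a‖, fun g => (Complex.abs_im_le_norm _).trans (FF_norm hφ a g)⟩

/-- The equivariant map attached to a state and a mean map. -/
def PhiMap (hq : IsMeanMap G Y q) (hφ : IsSta φ) : redCstar G →L[ℂ] C(Y, ℂ) :=
  LinearMap.mkContinuous
    { toFun := fun a => ⟨fun y => (q y (fun g => (FF φ a g).re) : ℂ)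
          + (q y (fun g => (FF φ a g).im) : ℂ) * Complex.I, by
        have h1 := hq.cont _ (FF_re hφ a)
        have h2 := hq.cont _ (FF_im hφ a)
        fun_prop⟩
      map_add' := fun a b => by
        ext y
        have h1 : (fun g => (FF φ (a + b) g).re) =
          (fun g => (FF φ a g).re) + (fun g => (FF φ b g).re) := by
            rw [FF_add hφ]; ext g; simp
        have h2 : (fun g => (FF φ (a + b) g).im) =
          (fun g => (FF φ a g).im) + (fun g => (FF φ b g).im) := by
            rw [FF_add hφ]; ext g; simp
        simp only [ContinuousMap.coe_mk, ContinuousMap.add_apply]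
        rw [h1, h2, hq.add _ _ _ (FF_re hφ a) (FF_re hφ b), hq.add _ _ _ (FF_im hφ a) (FF_im hφ b)]
        push_cast; ring
      map_smul' := fun c a => by
        ext y
        have h1 : (fun g => (FF φ (c • a) g).re) =
          c.re • (fun g => (FF φ a g).re) + (-c.im) • (fun g => (FF φ a g).im) := by
            rw [FF_smul hφ]; ext g; simp; ring
        have h2 : (fun g => (FF φ (c • a) g).im) =
          c.re • (fun g => (FF φ a g).im) + c.im • (fun g => (FF φ a g).re) := by
            rw [FF_smul hφ]; ext g; simp
        simp only [ContinuousMap.coe_mk, ContinuousMap.smul_apply, RingHom.id_apply, smul_eq_mul]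
        rw [h1, h2, hq.add _ _ _ ((FF_re hφ a).smul _) ((FF_im hφ a).smul _),
          hq.add _ _ _ ((FF_im hφ a).smul _) ((FF_re hφ a).smul _),
          hq.smul _ _ _ (FF_re hφ a), hq.smul _ _ _ (FF_re hφ a), hq.smul _ _ _ (FF_im hφ a),
          hq.smul _ _ _ (FF_im hφ a)]
        apply Complex.ext <;> simp <;> ring } 2 (fun a => by
      rw [ContinuousMap.norm_le _ (by positivity)]
      intro y
      refine (norm_add_le _ _).trans ?_
      have h1 := hq.abs_le y (C := ‖a‖) (f := fun g => (FF φ a g).re)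
        (fun g => (Complex.abs_re_le_norm _).trans (FF_norm hφ a g))
      have h2 := hq.abs_le y (C := ‖a‖) (f := fun g => (FF φ a g).im)
        (fun g => (Complex.abs_im_le_norm _).trans (FF_norm hφ a g))
      simp only [norm_mul, Complex.norm_I, mul_one, Complex.norm_real, Real.norm_eq_abs]
      linarith)

theorem PhiMap_apply (hq : IsMeanMap G Y q) (hφ : IsSta φ) (a : redCstar G) (y : Y) :
    PhiMap hq hφ a y = (q y (fun g => (FF φ a g).re) : ℂ)
          + (q y (fun g => (FF φ a g).im) : ℂ) * Complex.I := rfl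

theorem PhiMap_equiv (hq : IsMeanMap G Y q) (hφ : IsSta φ) : IsEquivariant (PhiMap hq hφ) := by
  intro g a y
  rw [PhiMap_apply, PhiMap_apply, hq.equiv _ _ _ (FF_re hφ a), hq.equiv _ _ _ (FF_im hφ a)]
  simp_rw [FF_equiv]

theorem PhiMap_pos (hq : IsMeanMap G Y q) (hφ : IsSta φ) (b : redCstar G) (y : Y) :
    0 ≤ PhiMap hq hφ (star b * b) y := by
  rw [PhiMap_apply]
  have h1 : (fun g => (FF φ (star b * b) g).im) = fun _ => 0 := by
    ext g
    exact (Complex.le_def.1 (FF_pos hφ b g)).2.symm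
  rw [h1, hq.const]
  have h2 := hq.nonneg y _ (FF_re hφ (star b * b))
    (fun g => (Complex.le_def.1 (FF_pos hφ b g)).1)
  simpa using h2

theorem PhiMap_one (hq : IsMeanMap G Y q) (hφ : IsSta φ) : PhiMap hq hφ 1 = 1 := by
  ext y
  rw [PhiMap_apply, FF_one hφ]
  simp only [Pi.one_apply, Complex.one_re, Complex.one_im, hq.const]
  simp

theorem ucp_of_pos (Φ : redCstar G →L[ℂ] C(Y, ℂ)) (h1 : Φ 1 = 1)
    (hpos : ∀ b y, 0 ≤ Φ (star b * b) y) : IsUCP Φ := by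
  refine ⟨h1, ?_⟩
  rintro n M ⟨N, rfl⟩
  obtain ⟨P, hP⟩ := cont_sqrt (fun y => Matrix.of fun i j => Φ ((star N * N) i j) y)
    (fun i j => (Φ ((star N * N) i j)).continuous) (fun y => by
      have key : ∀ c : Fin n → ℂ,
          0 ≤ ∑ i, ∑ j, star (c i) * Φ ((star N * N) i j) y * c j := by
        intro c
        let b : Fin n → redCstar G := fun k => ∑ j, c j • N k j
        have e : ∑ i, ∑ j, star (c i) * Φ ((star N * N) i j) y * c j =
            ∑ k, Φ (star (b k) * b k) y := by
          have e1 : ∀ k, star (b k) * b k =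
              ∑ i, ∑ j, (star (c i) * c j) • (star (N k i) * N k j) := by
            intro k
            simp only [b, star_sum, Finset.sum_mul_sum, star_smul, smul_mul_smul_comm]
          have e2 : ∀ i j, (star N * N) i j = ∑ k, star (N k i) * N k j := by
            intro i j
            rw [Matrix.mul_apply]; rfl
          simp only [e1, e2, map_sum, map_smul, ContinuousMap.sum_apply, ContinuousMap.smul_apply,
            smul_eq_mul, Finset.mul_sum, Finset.sum_mul]
          conv_rhs => rw [Finset.sum_comm]
          refine Finset.sum_congr rfl fun i _ => ?_
          rw [Finset.sum_comm]
          refine Finset.sum_congr rfl fun k _ => Finset.sum_congr rfl fun j _ => ?_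
          ring
        rw [e]
        exact Finset.sum_nonneg fun k _ => hpos (b k) y
      refine psd_of_nonneg _ fun c => ?_
      convert key c using 1
      simp only [dotProduct, Matrix.mulVec, Finset.mul_sum, Pi.star_apply, Matrix.of_apply,
        mul_assoc])
  refine ⟨P, ?_⟩
  ext i j y
  rw [hP]
  rfl

theorem conv_dir [T2Space Y] [ContinuousConstSMul G Y] (hY : IsFurstenberg G Y)
    (h : ∀ Φ : redCstar G →L[ℂ] C(Y, ℂ), IsUCP Φ → IsEquivariant Φ →
        ∀ (a : redCstar G) (x : Y), Φ a x = tauF G a) (s : G) (x : Y) (hx : s • x = x) : s = 1 := by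
  by_contra hs
  obtain ⟨q, hq⟩ := exists_meanMap hY
  obtain ⟨φ, hφ, hst⟩ := exists_amen_state hq x
  have h1 := h (PhiMap hq hφ) (ucp_of_pos _ (PhiMap_one hq hφ) (PhiMap_pos hq hφ))
    (PhiMap_equiv hq hφ) (uu s) x
  rw [tauF_uu s hs, PhiMap_apply] at h1
  have h2 := congrArg Complex.re h1
  simp at h2
  have hcl : IsClopen {y : Y | s • y = y} :=
    ⟨isClosed_eq (continuous_const_smul s) continuous_id,
      fix_open (fun U hU => closure_open hq hY.1 U hU) s⟩
  let f : C(Y, ℝ) := ⟨Set.indicator {y : Y | s • y = y} (fun _ => 2) - fun _ => 1,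
    (hcl.continuous_indicator continuous_const).sub continuous_const⟩
  have h3 := hq.mono x (io x f) _ (io_bdd x f) (FF_re hφ (uu s)) (fun g => by
    by_cases hg : s • (g • x) = g • x
    · have : FF φ (uu s) g = 1 := by
        rw [FF, ← uu_mul, ← uu_mul]
        apply hst
        rw [mul_smul, mul_smul, hg, inv_smul_smul]
      rw [this]
      simp [io, f, hg]; norm_num
    · have h4 := FF_norm hφ (uu s) g
      have h5 := uu_norm (G := G) s
      have h6 := (abs_le.1 (Complex.abs_re_le_norm (FF φ (uu s) g))).1
      have : io x f g = -1 := by simp [io, f, hg]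
      rw [this]; linarith)
  rw [hq.rigid hY.1, h2] at h3
  simp [f, hx] at h3

end Conv

section CS

theorem herm {A : Type*} [Ring A] [StarRing A] [Algebra ℂ A] [StarModule ℂ A] (φ : A → ℂ)
    (hadd : ∀ a b, φ (a + b) = φ a + φ b) (hsmul : ∀ (c : ℂ) a, φ (c • a) = c * φ a)
    (hpos : ∀ b, 0 ≤ φ (star b * b)) (x y : A) :
    (starRingEnd ℂ) (φ (star y * x)) = φ (star x * y) := by
  have e : ∀ c : ℂ, φ (star (x + c • y) * (x + c • y)) =
      φ (star x * x) + c * φ (star x * y) + star c * φ (star y * x)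
        + star c * c * φ (star y * y) := by
    intro c
    rw [star_add, star_smul, add_mul, mul_add, mul_add, hadd, hadd, hadd, mul_smul_comm,
      smul_mul_assoc, smul_mul_assoc, mul_smul_comm, hsmul, hsmul, hsmul, hsmul]
    ring
  have hx := (Complex.le_def.1 (hpos x)).2
  have hy := (Complex.le_def.1 (hpos y)).2
  have h1 := (Complex.le_def.1 (hpos (x + (1 : ℂ) • y))).2
  have h2 := (Complex.le_def.1 (hpos (x + Complex.I • y))).2
  rw [e] at h1 h2
  simp at h1 h2 hx hy
  rw [← hx, ← hy] at h1 h2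
  apply Complex.ext <;> simp <;> linarith

theorem cauchyS {A : Type*} [Ring A] [StarRing A] [Algebra ℂ A] [StarModule ℂ A] (φ : A → ℂ)
    (hadd : ∀ a b, φ (a + b) = φ a + φ b) (hsmul : ∀ (c : ℂ) a, φ (c • a) = c * φ a)
    (hpos : ∀ b, 0 ≤ φ (star b * b)) (x y : A) :
    ‖φ (star x * y)‖ ^ 2 ≤ (φ (star x * x)).re * (φ (star y * y)).re := by
  let c : PreInnerProductSpace.Core ℂ A :=
    { inner := fun x y => φ (star x * y)
      conj_inner_symm := fun x y => herm φ hadd hsmul hpos x y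
      re_inner_nonneg := fun x => (Complex.le_def.1 (hpos x)).1
      add_left := fun x y z => by rw [star_add, add_mul, hadd]
      smul_left := fun x y r => by
        rw [star_smul, smul_mul_assoc, hsmul]; rfl }
  have h := InnerProductSpace.Core.inner_mul_inner_self_le (c := c) x y
  have h2 : ‖φ (star y * x)‖ = ‖φ (star x * y)‖ := by
    rw [← herm φ hadd hsmul hpos x y, RCLike.norm_conj]
  change ‖φ (star x * y)‖ * ‖φ (star y * x)‖ ≤ _ at h
  rw [h2, ← sq] at h
  exact h

/-- A positive unital functional on a C*-algebra is a state. -/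
theorem isSta_of_pos {A : Type*} [CStarAlgebra A] (φ : A → ℂ)
    (hadd : ∀ a b, φ (a + b) = φ a + φ b) (hsmul : ∀ (c : ℂ) a, φ (c • a) = c * φ a)
    (hone : φ 1 = 1) (hpos : ∀ b, 0 ≤ φ (star b * b)) : IsSta φ := by
  refine ⟨hadd, hsmul, hone, hpos, fun a => ?_⟩
  letI : PartialOrder A := CStarAlgebra.spectralOrder A
  haveI : StarOrderedRing A := CStarAlgebra.spectralOrderedRing A
  have h1 : star a * a ≤ algebraMap ℝ A (‖a‖ ^ 2) := CStarAlgebra.star_mul_le_algebraMap_norm_sq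
  obtain ⟨b, hb⟩ := CStarAlgebra.nonneg_iff_eq_star_mul_self.1 (sub_nonneg.2 h1)
  have h2 := hpos b
  rw [← hb] at h2
  have h3 : φ (algebraMap ℝ A (‖a‖ ^ 2) - star a * a) = (‖a‖ ^ 2 : ℂ) - φ (star a * a) := by
    have : algebraMap ℝ A (‖a‖ ^ 2) - star a * a =
        ((‖a‖ ^ 2 : ℝ) : ℂ) • (1 : A) + (-1 : ℂ) • (star a * a) := by
      rw [Algebra.algebraMap_eq_smul_one, Complex.coe_smul]
      simp [sub_eq_add_neg]
    rw [this, hadd, hsmul, hsmul, hone]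
    push_cast; ring
  rw [h3] at h2
  have h4 := (Complex.le_def.1 h2).1
  have h5 := cauchyS φ hadd hsmul hpos 1 a
  simp only [star_one, one_mul, hone, Complex.one_re] at h5
  have h6 : ((‖a‖ : ℂ) ^ 2).re = ‖a‖ ^ 2 := by
    rw [← Complex.ofReal_pow, Complex.ofReal_re]
  rw [Complex.zero_re, Complex.sub_re, h6] at h4
  exact le_of_sq_le_sq (h5.trans (by linarith)) (norm_nonneg _)

/-- A contractive unital functional on a C*-algebra is a state. -/
theorem isSta_of_norm {A : Type*} [CStarAlgebra A] (φ : A → ℂ)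
    (hadd : ∀ a b, φ (a + b) = φ a + φ b) (hsmul : ∀ (c : ℂ) a, φ (c • a) = c * φ a)
    (hone : φ 1 = 1) (hbd : ∀ a, ‖φ a‖ ≤ ‖a‖) : IsSta φ := by
  refine ⟨hadd, hsmul, hone, fun b => ?_, hbd⟩
  rcases subsingleton_or_nontrivial A with hA | hA
  · have : φ 1 = 0 := by
      rw [Subsingleton.elim (1 : A) ((0 : ℂ) • 1), hsmul, zero_mul]
    rw [hone] at this
    exact absurd this one_ne_zero
  letI : PartialOrder A := CStarAlgebra.spectralOrder A
  haveI : StarOrderedRing A := CStarAlgebra.spectralOrderedRing A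
  set T := star b * b with hT
  have hT0 : 0 ≤ T := star_mul_self_nonneg b
  have hsa : star T = T := by rw [hT]; simp
  have hreal : (φ T).im = 0 := by
    have h1 : ∀ t : ℝ, (φ T).im ^ 2 + 2 * t * (φ T).im ≤ ‖T‖ ^ 2 := by
      intro t
      have h2 := hbd (T + (t * Complex.I : ℂ) • (1 : A))
      rw [hadd, hsmul, hone, mul_one] at h2
      have h3 : star (T + (t * Complex.I : ℂ) • (1 : A)) * (T + (t * Complex.I : ℂ) • (1 : A)) =
          T * T + ((t ^ 2 : ℝ) : ℂ) • (1 : A) := by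
        rw [star_add, star_smul, hsa, star_one, add_mul, mul_add, mul_add, mul_smul_comm,
          smul_mul_assoc, smul_mul_smul_comm, mul_one, one_mul, mul_one]
        have e1 : star (t * Complex.I : ℂ) = -(t * Complex.I) := by simp
        have e2 : -(t * Complex.I : ℂ) * (t * Complex.I) = ((t ^ 2 : ℝ) : ℂ) := by
          have := Complex.I_sq
          push_cast
          linear_combination (-(t : ℂ) ^ 2) * this
        rw [e1, e2, neg_smul]
        abel
      have h4 : ‖T + (t * Complex.I : ℂ) • (1 : A)‖ ^ 2 ≤ ‖T‖ ^ 2 + t ^ 2 := by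
        rw [sq, ← CStarRing.norm_star_mul_self, h3]
        refine (norm_add_le _ _).trans (add_le_add ?_ ?_)
        · rw [sq]; exact norm_mul_le _ _
        · rw [norm_smul, norm_one, Complex.norm_real, mul_one, Real.norm_eq_abs,
            abs_of_nonneg (sq_nonneg t)]
      have h5 : |(φ T + t * Complex.I).im| ≤ ‖T + (t * Complex.I : ℂ) • (1 : A)‖ :=
        (Complex.abs_im_le_norm _).trans h2
      have h6 : (φ T + t * Complex.I).im = (φ T).im + t := by simp
      rw [h6] at h5
      have h7 := (sq_le_sq₀ (abs_nonneg _) (norm_nonneg _)).2 h5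
      rw [sq_abs] at h7
      nlinarith
    by_contra hne
    have h8 := h1 ((‖T‖ ^ 2 + 1) / (2 * (φ T).im))
    have h9 : 2 * ((‖T‖ ^ 2 + 1) / (2 * (φ T).im)) * (φ T).im = ‖T‖ ^ 2 + 1 := by field_simp
    rw [h9] at h8
    nlinarith [sq_nonneg (φ T).im]
  have hre : 0 ≤ (φ T).re := by
    have h1 : T ≤ algebraMap ℝ A ‖T‖ := IsSelfAdjoint.le_algebraMap_norm_self hsa
    have h2 : ‖algebraMap ℝ A ‖T‖ - T‖ ≤ ‖algebraMap ℝ A ‖T‖‖ :=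
      CStarAlgebra.norm_le_norm_of_nonneg_of_le (sub_nonneg.2 h1) (sub_le_self _ hT0)
    rw [norm_algebraMap', norm_norm] at h2
    have h3 := (hbd _).trans h2
    have h4 : φ (algebraMap ℝ A ‖T‖ - T) = (‖T‖ : ℂ) - φ T := by
      have : algebraMap ℝ A ‖T‖ - T = ((‖T‖ : ℝ) : ℂ) • (1 : A) + (-1 : ℂ) • T := by
        rw [Algebra.algebraMap_eq_smul_one, Complex.coe_smul]
        simp [sub_eq_add_neg]
      rw [this, hadd, hsmul, hsmul, hone]; ring
    rw [h4] at h3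
    have h5 := (le_abs_self _).trans ((Complex.abs_re_le_norm _).trans h3)
    simp at h5
    exact h5
  exact Complex.le_def.2 ⟨hre, hreal.symm⟩

end CS

section Dir

variable {Y : Type u} [TopologicalSpace Y] [CompactSpace Y] [MulAction G Y]

theorem redCstar_closed : IsClosed (redCstar G : Set (ℓ²(G, ℂ) →L[ℂ] ℓ²(G, ℂ))) := by
  unfold redCstar
  exact StarSubalgebra.isClosed_topologicalClosure _

theorem span_dense (a : redCstar G) :
    a ∈ closure (Submodule.span ℂ (Set.range (uu (G := G))) : Set (redCstar G)) := by
  rw [closure_subtype]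
  have h1 : (a : ℓ²(G, ℂ) →L[ℂ] ℓ²(G, ℂ)) ∈
      closure (Submodule.span ℂ (Set.range (lreg (G := G))) : Set (ℓ²(G, ℂ) →L[ℂ] ℓ²(G, ℂ))) := by
    have h2 : (a : ℓ²(G, ℂ) →L[ℂ] ℓ²(G, ℂ)) ∈
        (StarAlgebra.adjoin ℂ (Set.range (lreg (G := G)))).topologicalClosure := by
      have := a.2
      unfold redCstar at this
      exact this
    have h3 : (StarAlgebra.adjoin ℂ (Set.range (lreg (G := G))) : Set (ℓ²(G, ℂ) →L[ℂ] ℓ²(G, ℂ)))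
        ⊆ (Submodule.span ℂ (Set.range (lreg (G := G))) : Set (ℓ²(G, ℂ) →L[ℂ] ℓ²(G, ℂ))) := by
      have h4 := StarAlgebra.adjoin_eq_span (R := ℂ) (Set.range (lreg (G := G)))
      intro x hx
      have hx' : x ∈ Subalgebra.toSubmodule
        (StarAlgebra.adjoin ℂ (Set.range (lreg (G := G)))).toSubalgebra := hx
      rw [h4] at hx'
      refine Submodule.span_mono ?_ hx'
      intro z hz
      induction hz using Submonoid.closure_induction with
      | mem z hz =>
        rcases hz with hz | hz
        · exact hz
        · obtain ⟨g, hg⟩ := hz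
          refine ⟨g⁻¹, ?_⟩
          rw [← lreg_star, hg, star_star]
      | one => exact ⟨1, lreg_one⟩
      | mul x y _ _ hx hy =>
        obtain ⟨g, rfl⟩ := hx
        obtain ⟨k, rfl⟩ := hy
        exact ⟨g * k, lreg_mul g k⟩
    have h5 : (a : ℓ²(G, ℂ) →L[ℂ] ℓ²(G, ℂ)) ∈
        closure (StarAlgebra.adjoin ℂ (Set.range (lreg (G := G))) :
          Set (ℓ²(G, ℂ) →L[ℂ] ℓ²(G, ℂ))) := by
      rw [← StarSubalgebra.topologicalClosure_coe]; exact h2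
    exact closure_mono h3 h5
  refine closure_mono ?_ h1
  intro z hz
  induction hz using Submodule.span_induction with
  | mem z hz =>
    obtain ⟨g, rfl⟩ := hz
    exact ⟨uu g, Submodule.subset_span ⟨g, rfl⟩, uu_coe g⟩
  | zero => exact ⟨0, Submodule.zero_mem _, rfl⟩
  | add x y _ _ hx hy =>
    obtain ⟨x, hx, rfl⟩ := hx
    obtain ⟨y, hy, rfl⟩ := hy
    exact ⟨x + y, Submodule.add_mem _ hx hy, rfl⟩
  | smul c x _ hx =>
    obtain ⟨x, hx, rfl⟩ := hx
    exact ⟨c • x, Submodule.smul_mem _ c hx, rfl⟩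

theorem eq_tau (Φ : redCstar G →L[ℂ] C(Y, ℂ)) (h1 : Φ 1 = 1)
    (h0 : ∀ t : G, t ≠ 1 → ∀ y, Φ (uu t) y = 0) (a : redCstar G) (y : Y) : Φ a y = tauF G a := by
  have htc : Continuous (tauF G) := by
    have : tauF G = fun a : redCstar G => inner ℂ (deltaOne (G := G))
        ((a : ℓ²(G, ℂ) →L[ℂ] ℓ²(G, ℂ)) (deltaOne (G := G))) := by
      ext a; unfold tauF; rfl
    rw [this]
    have hc : Continuous fun a : redCstar G => (a : ℓ²(G, ℂ) →L[ℂ] ℓ²(G, ℂ)) (deltaOne (G := G)) :=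
      (ContinuousLinearMap.apply ℂ ℓ²(G, ℂ) (deltaOne (G := G))).continuous.comp
        continuous_subtype_val
    exact continuous_const.inner hc
  have htadd : ∀ a b, tauF G (a + b) = tauF G a + tauF G b := by
    intro a b
    unfold tauF
    rw [← inner_add_right]; rfl
  have htsmul : ∀ (c : ℂ) b, tauF G (c • b) = c * tauF G b := by
    intro c b
    unfold tauF
    rw [← inner_smul_right]; rfl
  have hcl : IsClosed {a : redCstar G | Φ a y = tauF G a} :=
    isClosed_eq ((continuous_eval_const y).comp Φ.continuous) htc
  refine closure_minimal (fun z hz => ?_) hcl (span_dense a)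
  induction hz using Submodule.span_induction with
  | mem z hz =>
    obtain ⟨g, rfl⟩ := hz
    change Φ (uu g) y = tauF G (uu g)
    by_cases hg : g = 1
    · rw [hg, uu_one, h1, tauF_one]; rfl
    · rw [h0 g hg, tauF_uu g hg]
  | zero =>
    change Φ 0 y = tauF G 0
    have := htsmul 0 0
    rw [zero_smul, zero_mul] at this
    rw [this, map_zero]; rfl
  | add x y _ _ hx hy =>
    change Φ _ _ = _
    rw [map_add, htadd, ← show Φ x _ = _ from hx, ← show Φ y _ = _ from hy]; rfl
  | smul c x _ hx =>
    change Φ _ _ = _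
    rw [map_smul, htsmul, ← show Φ x _ = _ from hx]; rfl

theorem state_of_ucp (Φ : redCstar G →L[ℂ] C(Y, ℂ)) (hΦ : IsUCP Φ) (y : Y) :
    IsSta (fun a => Φ a y) := by
  haveI : IsClosed (redCstar G : Set (ℓ²(G, ℂ) →L[ℂ] ℓ²(G, ℂ))) := redCstar_closed
  have hadd : ∀ a b, Φ (a + b) y = Φ a y + Φ b y := fun a b => by rw [map_add]; rfl
  have hsmul : ∀ (c : ℂ) a, Φ (c • a) y = c * Φ a y := fun c a => by rw [map_smul]; rfl
  have hone : Φ 1 y = 1 := by rw [hΦ.1]; rfl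
  have hpos : ∀ b, 0 ≤ Φ (star b * b) y := by
    intro b
    obtain ⟨P, hP⟩ := hΦ.2 1 (Matrix.of fun _ _ => star b * b) ⟨Matrix.of fun _ _ => b, by
      ext i j
      rw [Matrix.mul_apply]; simp [Matrix.star_apply]⟩
    have h := congrFun (congrFun hP 0) 0
    rw [Matrix.mul_apply] at h
    simp only [Matrix.map_apply, Matrix.of_apply, Matrix.star_apply, Fin.sum_univ_one] at h
    rw [h]
    exact star_mul_self_nonneg (P 0 0 y)
  exact isSta_of_pos (A := redCstar G) (fun a => Φ a y) hadd hsmul hone hpos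

theorem exists_ext (φ : redCstar G → ℂ) (hφ : IsSta φ) :
    ∃ ψ : (ℓ²(G, ℂ) →L[ℂ] ℓ²(G, ℂ)) → ℂ, IsSta ψ ∧ ∀ a : redCstar G, ψ a = φ a := by
  let p : Submodule ℂ (ℓ²(G, ℂ) →L[ℂ] ℓ²(G, ℂ)) := Subalgebra.toSubmodule (redCstar G).toSubalgebra
  let f : p →L[ℂ] ℂ := LinearMap.mkContinuous
    { toFun := fun a => φ ⟨a.1, a.2⟩
      map_add' := fun a b => hφ.add ⟨a.1, a.2⟩ ⟨b.1, b.2⟩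
      map_smul' := fun c a => hφ.smul c ⟨a.1, a.2⟩ } 1 (fun a => by
        rw [one_mul]; exact hφ.bound ⟨a.1, a.2⟩)
  obtain ⟨g, hg, hn⟩ := exists_extension_norm_eq p f
  have hn1 : ‖g‖ ≤ 1 := by
    rw [hn]; exact LinearMap.mkContinuous_norm_le _ zero_le_one _
  have hext : ∀ a : redCstar G, g a = φ a := fun a => hg ⟨a.1, a.2⟩
  refine ⟨g, isSta_of_norm _ (fun a b => map_add g a b) (fun c a => by simp) ?_ fun a => ?_, hext⟩
  · have := hext 1
    rw [hφ.one] at this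
    exact this
  · have := g.le_opNorm a
    exact this.trans (mul_le_of_le_one_left (norm_nonneg _) hn1)

/-- Multiplication operators. -/
def Mop (x0 : Y) (f : C(Y, ℝ)) : ℓ²(G, ℂ) →L[ℂ] ℓ²(G, ℂ) :=
  LinearMap.mkContinuous
    { toFun := fun ξ => ⟨fun h => ((f (h • x0) : ℝ) : ℂ) * ξ h, by
        refine Memℓp.mono' (g := ((‖f‖ : ℝ) : ℂ) • (ξ : G → ℂ)) ((lp.memℓp ξ).const_smul _) fun h => ?_
        have := f.norm_coe_le_norm (h • x0)
        simp only [Pi.smul_apply, smul_eq_mul, norm_mul, Complex.norm_real, norm_norm]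
        exact mul_le_mul_of_nonneg_right this (norm_nonneg _)⟩
      map_add' := fun ξ η => by
        ext h
        change ((f (h • x0) : ℝ) : ℂ) * (ξ h + η h) = _ * ξ h + _ * η h
        ring
      map_smul' := fun c ξ => by
        ext h
        change ((f (h • x0) : ℝ) : ℂ) * (c * ξ h) = c * (_ * ξ h)
        ring } ‖f‖ (fun ξ => by
      have h1 : ‖((‖f‖ : ℝ) : ℂ) • ξ‖ = ‖f‖ * ‖ξ‖ := by
        rw [norm_smul, Complex.norm_real, norm_norm]
      rw [← h1]
      refine lp.norm_mono (by norm_num) fun h => ?_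
      have := f.norm_coe_le_norm (h • x0)
      rw [lp.coeFn_smul]
      simp only [Pi.smul_apply, smul_eq_mul, norm_mul, Complex.norm_real, norm_norm]
      change ‖((f (h • x0) : ℝ) : ℂ) * ξ h‖ ≤ _
      rw [norm_mul, Complex.norm_real]
      exact mul_le_mul_of_nonneg_right this (norm_nonneg _))

theorem Mop_apply (x0 : Y) (f : C(Y, ℝ)) (ξ : ℓ²(G, ℂ)) (h : G) :
    Mop x0 f ξ h = ((f (h • x0) : ℝ) : ℂ) * ξ h := rfl

theorem Mop_star (x0 : Y) (f : C(Y, ℝ)) : star (Mop (G := G) x0 f) = Mop x0 f := by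
  rw [ContinuousLinearMap.star_eq_adjoint]
  symm
  rw [ContinuousLinearMap.eq_adjoint_iff]
  intro ξ η
  rw [lp.inner_eq_tsum, lp.inner_eq_tsum]
  congr 1
  ext h
  simp only [Mop_apply, RCLike.inner_apply, map_mul, Complex.conj_ofReal]
  ring

theorem Mop_mul (x0 : Y) (f h : C(Y, ℝ)) : Mop (G := G) x0 f * Mop x0 h = Mop x0 (f * h) := by
  ext ξ k
  change Mop x0 f (Mop x0 h ξ) k = _
  simp only [Mop_apply, ContinuousMap.mul_apply]
  push_cast; ring

theorem Mop_one (x0 : Y) : Mop (G := G) x0 1 = 1 := by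
  ext ξ k
  rw [Mop_apply]; simp

theorem Mop_add (x0 : Y) (f h : C(Y, ℝ)) : Mop (G := G) x0 (f + h) = Mop x0 f + Mop x0 h := by
  ext ξ k
  change Mop x0 (f + h) ξ k = Mop x0 f ξ k + Mop x0 h ξ k
  simp only [Mop_apply, ContinuousMap.add_apply]
  push_cast; ring

theorem Mop_smul (x0 : Y) (c : ℝ) (f : C(Y, ℝ)) :
    Mop (G := G) x0 (c • f) = (c : ℂ) • Mop x0 f := by
  ext ξ k
  change Mop x0 (c • f) ξ k = (c : ℂ) * Mop x0 f ξ k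
  simp only [Mop_apply, ContinuousMap.smul_apply, smul_eq_mul]
  push_cast; ring

theorem Mop_conj [ContinuousConstSMul G Y] (x0 : Y) (f : C(Y, ℝ)) (g : G) :
    lreg g⁻¹ * Mop x0 f * lreg g = Mop x0 (f.comp (trC g)) := by
  ext ξ k
  change lreg g⁻¹ (Mop x0 f (lreg g ξ)) k = _
  rw [lreg_apply, Mop_apply, Mop_apply, lreg_apply]
  simp [trC, mul_smul]

theorem dir_aux [T2Space Y] [ContinuousConstSMul G Y] (hb : IsBoundary G Y)
    (hfree : ∀ (s : G) (x : Y), s • x = x → s = 1)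
    (Φ : redCstar G →L[ℂ] C(Y, ℂ)) (hΦ : IsUCP Φ) (hE : IsEquivariant Φ) :
    ∃ z : Y, ∀ s : G, s ≠ 1 → Φ (uu s) z = 0 := by
  obtain ⟨w⟩ := hb.1
  obtain ⟨ψ, hψ, hext⟩ := exists_ext _ (state_of_ucp Φ hΦ w)
  let Λ : C(Y, ℝ) →ₗ[ℝ] ℝ :=
    { toFun := fun f => (ψ (Mop w f)).re
      map_add' := fun f h => by rw [Mop_add, hψ.add, Complex.add_re]
      map_smul' := fun c f => by rw [Mop_smul, hψ.smul]; simp }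
  have hΛ : IsSt Λ := by
    constructor
    · change (ψ (Mop w 1)).re = 1
      rw [Mop_one, hψ.one]; rfl
    · intro f hf
      change 0 ≤ (ψ (Mop w f)).re
      let r : C(Y, ℝ) := ⟨fun y => √(f y), Real.continuous_sqrt.comp f.continuous⟩
      have h1 : Mop (G := G) w f = star (Mop w r) * Mop w r := by
        rw [Mop_star, Mop_mul]
        congr 1
        ext y
        exact (Real.mul_self_sqrt (hf y)).symm
      rw [h1]
      exact (Complex.le_def.1 (hψ.pos _)).1
  obtain ⟨U, hU⟩ := bdry_filter hb Λ hΛ w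
  obtain ⟨z, -, hz⟩ := isCompact_univ.ultrafilter_le_nhds' (U.map (fun g : G => g • w))
    Filter.univ_mem
  have hz' : Tendsto (fun g : G => g • w) (U : Filter G) (𝓝 z) := hz
  have hln : ∀ g : G, ‖lreg g‖ ≤ 1 := fun g =>
    ContinuousLinearMap.opNorm_le_bound _ zero_le_one fun f => by rw [lreg_norm, one_mul]
  have hst : ∀ g : G, IsSta (fun T => ψ (lreg g⁻¹ * T * lreg g)) := by
    intro g
    refine ⟨fun a b => ?_, fun c a => ?_, ?_, fun b => ?_, fun a => ?_⟩
    · rw [mul_add, add_mul, hψ.add]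
    · rw [mul_smul_comm, smul_mul_assoc, hψ.smul]
    · rw [mul_one, ← lreg_mul, inv_mul_cancel, lreg_one, hψ.one]
    · have : lreg g⁻¹ * (star b * b) * lreg g = star (b * lreg g) * (b * lreg g) := by
        rw [star_mul, lreg_star]; simp only [mul_assoc]
      rw [this]; exact hψ.pos _
    · refine (hψ.bound _).trans ((norm_mul_le _ _).trans ?_)
      refine (mul_le_of_le_one_right (norm_nonneg _) (hln g)).trans ?_
      exact (norm_mul_le _ _).trans (mul_le_of_le_one_left (norm_nonneg _) (hln _))
  obtain ⟨ψ', hψ', hlim⟩ := IsSta.lim U _ hst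
  have hA : ∀ s : G, ψ' (lreg s) = Φ (uu s) z := by
    intro s
    refine tendsto_nhds_unique (hlim (lreg s)) ?_
    have h1 : ∀ g : G, ψ (lreg g⁻¹ * lreg s * lreg g) = Φ (uu s) (g • w) := by
      intro g
      have h2 := hE g⁻¹ (uu s) w
      rw [inv_inv] at h2
      rw [← h2, ← hext, ← uu_mul, ← uu_mul, uu_coe, lreg_mul, lreg_mul]
    simp_rw [h1]
    exact ((Φ (uu s)).continuous.tendsto z).comp hz'
  have hM : ∀ f : C(Y, ℝ), (ψ' (Mop w f)).re = f w := by
    intro f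
    refine tendsto_nhds_unique ((Complex.continuous_re.tendsto _).comp (hlim (Mop w f))) ?_
    have h1 : (Complex.re ∘ fun g : G => ψ (lreg g⁻¹ * Mop w f * lreg g)) =
        fun g => Λ (f.comp (trC g)) := by
      ext g
      change (ψ (lreg g⁻¹ * Mop w f * lreg g)).re = (ψ (Mop w (f.comp (trC g)))).re
      rw [Mop_conj]
    rw [h1]
    exact hU f
  have hcs := cauchyS ψ' hψ'.add hψ'.smul hψ'.pos
  refine ⟨z, fun s hs => ?_⟩
  rw [← hA]
  have hne : s⁻¹ • w ≠ w := fun h => hs (by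
    have := hfree _ _ h
    simpa using this)
  obtain ⟨f, hf1, hf2, hf3⟩ := exists_continuous_zero_one_of_isClosed
    (isClosed_singleton (x := s⁻¹ • w)) (isClosed_singleton (x := w)) (by simpa using hne)
  have hf1' : f (s⁻¹ • w) = 0 := hf1 rfl
  have hf2' : f w = 1 := hf2 rfl
  let f' : C(Y, ℝ) := f.comp (trC s⁻¹)
  have hcomm : lreg s * Mop w f = Mop w f' * lreg s := by
    have := Mop_conj w f s⁻¹
    rw [inv_inv] at this
    rw [← this, mul_assoc, ← lreg_mul, inv_mul_cancel, lreg_one, mul_one]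
  have e1 : ψ' (lreg s * Mop w (1 + (-1 : ℝ) • f)) = 0 := by
    have h1 := hcs (lreg s⁻¹) (Mop w (1 + (-1 : ℝ) • f))
    rw [Mop_star, Mop_mul, hM, lreg_star, inv_inv] at h1
    have h2 : ((1 + (-1 : ℝ) • f) * (1 + (-1 : ℝ) • f) : C(Y, ℝ)) w = 0 := by
      simp [hf2']
    rw [h2, mul_zero] at h1
    exact norm_eq_zero.1 (pow_eq_zero_iff two_ne_zero |>.1 (le_antisymm h1 (sq_nonneg _)))
  have e2 : ψ' (Mop w f' * lreg s) = 0 := by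
    have h1 := hcs (Mop w f') (lreg s)
    rw [Mop_star, Mop_mul, hM] at h1
    have h2 : (f' * f' : C(Y, ℝ)) w = 0 := by
      have : f' w = f (s⁻¹ • w) := rfl
      simp [this, hf1']
    rw [h2, zero_mul] at h1
    exact norm_eq_zero.1 (pow_eq_zero_iff two_ne_zero |>.1 (le_antisymm h1 (sq_nonneg _)))
  have e3 : lreg s = lreg s * Mop w (1 + (-1 : ℝ) • f) + Mop w f' * lreg s := by
    rw [← hcomm, Mop_add, Mop_smul, Mop_one]
    simp [mul_add]
  rw [e3, hψ'.add, e1, e2, add_zero]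

theorem dir [T2Space Y] [ContinuousConstSMul G Y] (hb : IsBoundary G Y)
    (hfree : ∀ (s : G) (x : Y), s • x = x → s = 1)
    (Φ : redCstar G →L[ℂ] C(Y, ℂ)) (hΦ : IsUCP Φ) (hE : IsEquivariant Φ)
    (a : redCstar G) (x : Y) : Φ a x = tauF G a := by
  obtain ⟨z, hz⟩ := dir_aux hb hfree Φ hΦ hE
  refine eq_tau Φ hΦ.1 (fun t ht y => ?_) a x
  have horb : ∀ g : G, Φ (uu t) (g • z) = 0 := by
    intro g
    have h2 := hE g⁻¹ (uu t) z
    rw [inv_inv] at h2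
    rw [← h2, ← uu_mul, ← uu_mul]
    apply hz
    intro h
    apply ht
    have h3 : t = g * (g⁻¹ * t * g) * g⁻¹ := by group
    rw [h3, h]; simp
  let Λ : C(Y, ℝ) →ₗ[ℝ] ℝ :=
    { toFun := fun f => f z
      map_add' := fun _ _ => rfl
      map_smul' := fun _ _ => rfl }
  obtain ⟨U, hU⟩ := bdry_filter hb Λ ⟨rfl, fun f hf => hf z⟩ y
  have hr := hU ⟨fun y => (Φ (uu t) y).re, Complex.continuous_re.comp (Φ (uu t)).continuous⟩
  have hi := hU ⟨fun y => (Φ (uu t) y).im, Complex.continuous_im.comp (Φ (uu t)).continuous⟩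
  have hr2 : Tendsto (fun g : G => (Φ (uu t) (g • z)).re) (U : Filter G)
    (𝓝 ((Φ (uu t) y).re)) := hr
  have hi2 : Tendsto (fun g : G => (Φ (uu t) (g • z)).im) (U : Filter G)
    (𝓝 ((Φ (uu t) y).im)) := hi
  simp_rw [horb] at hr2 hi2
  exact Complex.ext (tendsto_nhds_unique hr2 tendsto_const_nhds)
    (tendsto_nhds_unique hi2 tendsto_const_nhds)

end Dir

end helpers

/-- The action of a discrete group on its Furstenberg boundary is free if and only if the only
`G`-equivariant u.c.p. map `C*_λ(G) → C(∂_F G)` is the one given by the canonical trace. -/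
theorem free_boundary_action_iff_unique_equivariant_ucp (G : Type u) [Group G] (Y : Type u)
    [TopologicalSpace Y] [CompactSpace Y] [T2Space Y] [MulAction G Y] [ContinuousConstSMul G Y]
    (hY : IsFurstenberg G Y) :
    (∀ (s : G) (x : Y), s • x = x → s = 1) ↔
      ∀ Φ : redCstar G →L[ℂ] C(Y, ℂ), IsUCP Φ → IsEquivariant Φ →
        ∀ (a : redCstar G) (x : Y), Φ a x = tauF G a := by
  constructor
  · intro hfree Φ hΦ hE a x
    exact dir hY.1 hfree Φ hΦ hE a x
  · intro h s x hx
    exact conv_dir hY h s x hx
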